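/- (Lemma "flatgraphlem", graphical case: a graph starting in a very thin slab with bounded gradient becomes very flat after a short time.) Let n ≥ 1. For every L₀ ≥ 1 there exist Λ₁ > 1 and γ₁ ∈ (0,1) such that the following holds. Let γ ∈ (0,γ₁], ρ₀ > 0, t₁ ∈ ℝ, set s₁ := t₁ + γ⁴ρ₀², let t₂ > s₁, ẑ₀ ∈ ℝⁿ, and let f : [t₁,t₂) × Bⁿ(ẑ₀,4ρ₀) → ℝ be a graphical mean curvature flow with |f(t,x)| < 4ρ₀ for all (t,x). Suppose sup_{Bⁿ(ẑ₀,4ρ₀)} |Df(t₁,·)| ≤ L₀ and sup_{Bⁿ(ẑ₀,4ρ₀)} |f(t₁,·)| ≤ γ⁴ρ₀. Then for all x ∈ Bⁿ(ẑ₀,ρ₀): |f(s₁,x)| ≤ Λ₁γ⁴ρ₀, |Df(s₁,x)| ≤ Λ₁γ, and |D²f(s₁,x)| ≤ Λ₁γ⁻²ρ₀⁻¹, where |D²f| denotes the Frobenius norm of the spatial Hessian. -/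

import Mathlib

open Metric Set MeasureTheory

/-- Partial derivative `∂ᵢ g (x)`. -/
noncomputable def pd {n : ℕ} (g : EuclideanSpace ℝ (Fin n) → ℝ) (x : EuclideanSpace ℝ (Fin n))
    (i : Fin n) : ℝ :=
  fderiv ℝ g x (EuclideanSpace.single i 1)

/-- Second partial derivative `∂ᵢ∂ⱼ g (x)`. -/
noncomputable def pd2 {n : ℕ} (g : EuclideanSpace ℝ (Fin n) → ℝ) (x : EuclideanSpace ℝ (Fin n))
    (i j : Fin n) : ℝ :=
  fderiv ℝ (fun y => pd g y j) x (EuclideanSpace.single i 1)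

/-- Squared Euclidean norm `|Dg(x)|²` of the spatial gradient. -/
noncomputable def gradNormSq {n : ℕ} (g : EuclideanSpace ℝ (Fin n) → ℝ)
    (x : EuclideanSpace ℝ (Fin n)) : ℝ :=
  ∑ i, (pd g x i) ^ 2

/-- Euclidean norm `|Dg(x)|` of the spatial gradient. -/
noncomputable def gradNorm {n : ℕ} (g : EuclideanSpace ℝ (Fin n) → ℝ)
    (x : EuclideanSpace ℝ (Fin n)) : ℝ :=
  Real.sqrt (gradNormSq g x)

/-- Frobenius norm `|D²g(x)|` of the spatial Hessian. -/
noncomputable def hessNorm {n : ℕ} (g : EuclideanSpace ℝ (Fin n) → ℝ)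
    (x : EuclideanSpace ℝ (Fin n)) : ℝ :=
  Real.sqrt (∑ i, ∑ j, (pd2 g x i j) ^ 2)

/-- Right-hand side of the graphical mean curvature flow equation:
`∑ᵢⱼ (δᵢⱼ − ∂ᵢg ∂ⱼg / (1+|Dg|²)) ∂ᵢ∂ⱼ g`. -/
noncomputable def mcfRHS {n : ℕ} (g : EuclideanSpace ℝ (Fin n) → ℝ)
    (x : EuclideanSpace ℝ (Fin n)) : ℝ :=
  ∑ i, ∑ j,
    ((if i = j then (1 : ℝ) else 0) - pd g x i * pd g x j / (1 + gradNormSq g x)) * pd2 g x i j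

/-- `f` is a (smooth) graphical mean curvature flow on `I × U`. -/
def IsGMCF {n : ℕ} (I : Set ℝ) (U : Set (EuclideanSpace ℝ (Fin n)))
    (f : ℝ → EuclideanSpace ℝ (Fin n) → ℝ) : Prop :=
  ContDiffOn ℝ (⊤ : ℕ∞) (fun p : ℝ × EuclideanSpace ℝ (Fin n) => f p.1 p.2) (I ×ˢ U) ∧
  ∀ t ∈ I, ∀ x ∈ U, deriv (fun s => f s x) t = mcfRHS (f t) x

/-- Squared norm `|A|²(g,x)` of the second fundamental form of the graph of `g`
at `(x, g(x))`. -/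
noncomputable def secondFF2 {n : ℕ} (g : EuclideanSpace ℝ (Fin n) → ℝ)
    (x : EuclideanSpace ℝ (Fin n)) : ℝ :=
  ∑ i, ∑ j, ∑ k, ∑ l,
    ((if i = k then (1 : ℝ) else 0) - pd g x i * pd g x k / (1 + gradNormSq g x)) *
      ((if j = l then (1 : ℝ) else 0) - pd g x j * pd g x l / (1 + gradNormSq g x)) *
      (pd2 g x i j / Real.sqrt (1 + gradNormSq g x)) *
      (pd2 g x k l / Real.sqrt (1 + gradNormSq g x))


open scoped ContDiff

/-- Short name for Euclidean space. -/
abbrev EE (n : ℕ) := EuclideanSpace ℝ (Fin n)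

/-- Directional derivative in space-time. -/
noncomputable def dv {n : ℕ} (v : ℝ × EE n) (F : ℝ × EE n → ℝ) (p : ℝ × EE n) : ℝ :=
  fderiv ℝ F p v

/-- The spatial coordinate direction. -/
noncomputable def ev {n : ℕ} (i : Fin n) : ℝ × EE n := (0, EuclideanSpace.single i 1)

/-- Smoothness at all points of `Ω`. -/
def Sm {n : ℕ} (Ω : Set (ℝ × EE n)) (F : ℝ × EE n → ℝ) : Prop :=
  ∀ p ∈ Ω, ContDiffAt ℝ ∞ F p

section calculus
variable {n : ℕ} {Ω : Set (ℝ × EE n)} {F G : ℝ × EE n → ℝ} {p v w : ℝ × EE n}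

lemma Sm.diff (hF : Sm Ω F) (hp : p ∈ Ω) : DifferentiableAt ℝ F p :=
  (hF p hp).differentiableAt (by simp)

lemma Sm.add (hF : Sm Ω F) (hG : Sm Ω G) : Sm Ω (F + G) := fun p hp => (hF p hp).add (hG p hp)
lemma Sm.sub (hF : Sm Ω F) (hG : Sm Ω G) : Sm Ω (F - G) := fun p hp => (hF p hp).sub (hG p hp)
lemma Sm.mul (hF : Sm Ω F) (hG : Sm Ω G) : Sm Ω (F * G) := fun p hp => (hF p hp).mul (hG p hp)
lemma Sm.const (c : ℝ) : Sm Ω (fun _ => c) := fun _ _ => contDiffAt_const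
lemma Sm.pow (hF : Sm Ω F) (k : ℕ) : Sm Ω (F ^ k) := fun p hp => (hF p hp).pow k
lemma Sm.smul (c : ℝ) (hF : Sm Ω F) : Sm Ω (c • F) := fun p hp => (hF p hp).const_smul c
lemma Sm.sum {ι : Type*} (s : Finset ι) {F : ι → ℝ × EE n → ℝ} (hF : ∀ i ∈ s, Sm Ω (F i)) :
    Sm Ω (∑ i ∈ s, F i) := by
  intro p hp
  have := ContDiffAt.sum (s := s) (f := F) (x := p) (n := ∞) (𝕜 := ℝ) (fun i hi => hF i hi p hp)
  convert this using 1
  ext x; simp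
lemma Sm.inv (hF : Sm Ω F) (h0 : ∀ p ∈ Ω, F p ≠ 0) : Sm Ω (F⁻¹) :=
  fun p hp => (hF p hp).inv (h0 p hp)
lemma Sm.dv (hF : Sm Ω F) (v : ℝ × EE n) : Sm Ω (dv v F) := by
  intro p hp
  have h := (hF p hp).fderiv_right (m := ∞) (by simp)
  exact h.clm_apply contDiffAt_const

lemma dv_add (hF : Sm Ω F) (hG : Sm Ω G) (hp : p ∈ Ω) : dv v (F + G) p = dv v F p + dv v G p := by
  simp [dv, fderiv_add (hF.diff hp) (hG.diff hp)]
lemma dv_sub (hF : Sm Ω F) (hG : Sm Ω G) (hp : p ∈ Ω) : dv v (F - G) p = dv v F p - dv v G p := by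
  simp [dv, fderiv_sub (hF.diff hp) (hG.diff hp)]
lemma dv_mul (hF : Sm Ω F) (hG : Sm Ω G) (hp : p ∈ Ω) :
    dv v (F * G) p = F p * dv v G p + G p * dv v F p := by
  simp [dv, fderiv_mul (hF.diff hp) (hG.diff hp)]
lemma dv_const (c : ℝ) : dv v (fun _ => c) p = 0 := by simp [dv]
lemma dv_smul (c : ℝ) (hF : Sm Ω F) (hp : p ∈ Ω) : dv v (c • F) p = c * dv v F p := by
  simp [dv, fderiv_const_smul (hF.diff hp)]
lemma dv_sum {ι : Type*} (s : Finset ι) {F : ι → ℝ × EE n → ℝ} (hF : ∀ i ∈ s, Sm Ω (F i))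
    (hp : p ∈ Ω) : dv v (∑ i ∈ s, F i) p = ∑ i ∈ s, dv v (F i) p := by
  simp [dv, fderiv_sum (fun i hi => (hF i hi).diff hp)]
lemma dv_inv (hF : Sm Ω F) (h0 : ∀ p ∈ Ω, F p ≠ 0) (hp : p ∈ Ω) :
    dv v (F⁻¹) p = - (F p)⁻¹ ^ 2 * dv v F p := by
  have h : HasFDerivAt F⁻¹ _ p :=
    (hasDerivAt_inv (h0 p hp)).comp_hasFDerivAt p (hF.diff hp).hasFDerivAt
  simp [dv, h.fderiv]
lemma dv_congr (hΩ : IsOpen Ω) (h : ∀ p ∈ Ω, F p = G p) (hp : p ∈ Ω) : dv v F p = dv v G p := by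
  have : F =ᶠ[nhds p] G := Filter.eventually_of_mem (hΩ.mem_nhds hp) h
  simp [dv, this.fderiv_eq]
lemma dv_comm (hF : Sm Ω F) (hp : p ∈ Ω) : dv v (dv w F) p = dv w (dv v F) p := by
  have h1 : IsSymmSndFDerivAt ℝ F p := (hF p hp).isSymmSndFDerivAt (by
    simpa using (WithTop.coe_le_coe.2 (le_top : (2 : ℕ∞) ≤ ⊤)))
  have hd : DifferentiableAt ℝ (fderiv ℝ F) p :=
    ((hF p hp).fderiv_right (m := ∞) (by simp)).differentiableAt (by simp)
  have key : ∀ a b : ℝ × EE n, dv a (dv b F) p = fderiv ℝ (fderiv ℝ F) p a b := by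
    intro a b
    have := (hd.hasFDerivAt.clm_apply (hasFDerivAt_const b p)).fderiv
    unfold dv
    rw [this]; simp
  rw [key, key]
  exact h1.eq v w

end calculus

/-- Bilinear form of a matrix on gradients. -/
noncomputable def AA {n : ℕ} (a : Fin n → Fin n → ℝ) (F G : ℝ × EE n → ℝ) (p : ℝ × EE n) : ℝ :=
  ∑ i, ∑ j, a i j * (dv (ev i) F p * dv (ev j) G p)

/-- The parabolic operator `∂ₜ - aᵢⱼ ∂ᵢⱼ`. -/
noncomputable def PP {n : ℕ} (a : Fin n → Fin n → ℝ) (F : ℝ × EE n → ℝ) (p : ℝ × EE n) : ℝ :=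
  dv (1, 0) F p - ∑ i, ∑ j, a i j * dv (ev i) (dv (ev j) F) p

section ops
variable {n : ℕ} {Ω : Set (ℝ × EE n)} {F G H : ℝ × EE n → ℝ} {p v w : ℝ × EE n}
  {a : Fin n → Fin n → ℝ}

lemma PP_add (hΩ : IsOpen Ω) (hF : Sm Ω F) (hG : Sm Ω G) (hp : p ∈ Ω) :
    PP a (F + G) p = PP a F p + PP a G p := by
  have : ∀ i j : Fin n, dv (ev i) (dv (ev j) (F + G)) p
      = dv (ev i) (dv (ev j) F) p + dv (ev i) (dv (ev j) G) p := by
    intro i j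
    rw [dv_congr (G := dv (ev j) F + dv (ev j) G) hΩ (fun q hq => by
      simp [dv_add hF hG hq]) hp, dv_add (hF.dv _) (hG.dv _) hp]
  simp only [PP, this, dv_add hF hG hp, mul_add, Finset.sum_add_distrib]
  ring

lemma PP_smul (hΩ : IsOpen Ω) (c : ℝ) (hF : Sm Ω F) (hp : p ∈ Ω) :
    PP a (c • F) p = c * PP a F p := by
  have : ∀ i j : Fin n, dv (ev i) (dv (ev j) (c • F)) p
      = c * dv (ev i) (dv (ev j) F) p := by
    intro i j
    rw [dv_congr (G := c • dv (ev j) F) hΩ (fun q hq => by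
      simp [dv_smul c hF hq]) hp, dv_smul c (hF.dv _) hp]
  simp only [PP, this, dv_smul c hF hp, mul_sub, Finset.mul_sum]
  congr 1
  exact Finset.sum_congr rfl fun i _ => Finset.sum_congr rfl fun j _ => by ring

lemma PP_sub (hΩ : IsOpen Ω) (hF : Sm Ω F) (hG : Sm Ω G) (hp : p ∈ Ω) :
    PP a (F - G) p = PP a F p - PP a G p := by
  have : F - G = F + (-1 : ℝ) • G := by ext; simp [sub_eq_add_neg]
  rw [this, PP_add hΩ hF (hG.smul _) hp, PP_smul hΩ _ hG hp]; ring

lemma dv_const_fun (c : ℝ) : dv v (fun _ : ℝ × EE n => c) = fun _ => 0 := by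
  ext q; exact dv_const c

lemma PP_const (c : ℝ) : PP a (fun _ => c) p = 0 := by
  simp [PP, dv_const_fun]

lemma PP_sum (hΩ : IsOpen Ω) {ι : Type*} (s : Finset ι) {F : ι → ℝ × EE n → ℝ}
    (hF : ∀ i, Sm Ω (F i)) (hp : p ∈ Ω) :
    PP a (∑ i ∈ s, F i) p = ∑ i ∈ s, PP a (F i) p := by
  classical
  induction s using Finset.induction_on with
  | empty =>
    simp only [Finset.sum_empty]
    exact PP_const 0
  | insert i s hi ih =>
    rw [Finset.sum_insert hi, Finset.sum_insert hi,
      PP_add hΩ (hF i) (Sm.sum s fun j _ => hF j) hp, ih]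

lemma AA_symm (ha : ∀ i j, a i j = a j i) : AA a F G p = AA a G F p := by
  unfold AA
  rw [Finset.sum_comm]
  refine Finset.sum_congr rfl fun i _ => Finset.sum_congr rfl fun j _ => ?_
  rw [ha j i]; ring

lemma PP_mul (hΩ : IsOpen Ω) (ha : ∀ i j, a i j = a j i) (hF : Sm Ω F) (hG : Sm Ω G)
    (hp : p ∈ Ω) :
    PP a (F * G) p = F p * PP a G p + G p * PP a F p - 2 * AA a F G p := by
  have h2 : ∀ i j : Fin n, dv (ev i) (dv (ev j) (F * G)) p
      = F p * dv (ev i) (dv (ev j) G) p + dv (ev j) G p * dv (ev i) F p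
        + (G p * dv (ev i) (dv (ev j) F) p + dv (ev j) F p * dv (ev i) G p) := by
    intro i j
    rw [dv_congr (G := F * dv (ev j) G + G * dv (ev j) F) hΩ (fun q hq => by
      simp [dv_mul hF hG hq]) hp, dv_add (hF.mul (hG.dv _)) (hG.mul (hF.dv _)) hp,
      dv_mul hF (hG.dv _) hp, dv_mul hG (hF.dv _) hp]
  have e1 : AA a F G p = ∑ i, ∑ j, a i j * (dv (ev j) F p * dv (ev i) G p) := by
    rw [AA_symm ha]; unfold AA
    exact Finset.sum_congr rfl fun i _ => Finset.sum_congr rfl fun j _ => by ring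
  have e2 : 2 * AA a F G p = ∑ i, ∑ j, a i j * (dv (ev i) F p * dv (ev j) G p)
      + ∑ i, ∑ j, a i j * (dv (ev j) F p * dv (ev i) G p) := by
    rw [← e1]; unfold AA; ring
  rw [e2]
  simp only [PP, h2, dv_mul hF hG hp, mul_sub, Finset.mul_sum]
  have e3 : ∑ i, ∑ j, a i j * (F p * dv (ev i) (dv (ev j) G) p + dv (ev j) G p * dv (ev i) F p
        + (G p * dv (ev i) (dv (ev j) F) p + dv (ev j) F p * dv (ev i) G p))
      = ∑ i, ∑ j, F p * (a i j * dv (ev i) (dv (ev j) G) p)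
        + ∑ i, ∑ j, G p * (a i j * dv (ev i) (dv (ev j) F) p)
        + ∑ i, ∑ j, a i j * (dv (ev i) F p * dv (ev j) G p)
        + ∑ i, ∑ j, a i j * (dv (ev j) F p * dv (ev i) G p) := by
    simp only [← Finset.sum_add_distrib]
    exact Finset.sum_congr rfl fun i _ => Finset.sum_congr rfl fun j _ => by ring
  rw [e3]; ring

lemma PP_sq (hΩ : IsOpen Ω) (ha : ∀ i j, a i j = a j i) (hF : Sm Ω F)
    (hp : p ∈ Ω) :
    PP a (F ^ 2) p = 2 * F p * PP a F p - 2 * AA a F F p := by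
  rw [pow_two, PP_mul hΩ ha hF hF hp]; ring

lemma AA_mul_right (hG : Sm Ω G) (hH : Sm Ω H) (hp : p ∈ Ω) :
    AA a F (G * H) p = G p * AA a F H p + H p * AA a F G p := by
  unfold AA
  simp only [dv_mul hG hH hp, Finset.mul_sum, ← Finset.sum_add_distrib]
  exact Finset.sum_congr rfl fun i _ => Finset.sum_congr rfl fun j _ => by ring

lemma AA_sum_right {ι : Type*} (s : Finset ι) {G : ι → ℝ × EE n → ℝ}
    (hG : ∀ i, Sm Ω (G i)) (hp : p ∈ Ω) :
    AA a F (∑ k ∈ s, G k) p = ∑ k ∈ s, AA a F (G k) p := by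
  unfold AA
  simp only [dv_sum s (fun i _ => hG i) hp, Finset.mul_sum]
  rw [Finset.sum_comm (s := s)]
  refine Finset.sum_congr rfl fun i _ => ?_
  rw [Finset.sum_comm (s := s)]

lemma AA_zero_left (h : ∀ i, dv (ev i) F p = 0) : AA a F G p = 0 := by
  simp [AA, h]

end ops

section maxprinciple
variable {n : ℕ}

lemma first_touch {G : ℝ × EE n → ℝ} {a b θ : ℝ} {x0 : EE n} {r : ℝ}
    (hG : ContinuousOn G (Icc a b ×ˢ closedBall x0 r))
    (hinit : ∀ x ∈ closedBall x0 r, G (a, x) < θ)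
    (hlat : ∀ t ∈ Icc a b, ∀ x ∈ sphere x0 r, G (t, x) < θ)
    (hno : ∀ t ∈ Ioc a b, ∀ x ∈ ball x0 r, G (t, x) = θ →
      (∀ s ∈ Icc a t, ∀ y ∈ closedBall x0 r, G (s, y) ≤ θ) → False) :
    ∀ t ∈ Icc a b, ∀ x ∈ closedBall x0 r, G (t, x) < θ := by
  by_contra! hcon
  obtain ⟨t', ht', x', hx', hG'⟩ := hcon
  set K := Icc a b ×ˢ closedBall x0 r
  have hK : IsCompact K := isCompact_Icc.prod (isCompact_closedBall x0 r)
  have hS : IsCompact (K ∩ G ⁻¹' (Ici θ)) :=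
    hK.of_isClosed_subset (hG.preimage_isClosed_of_isClosed hK.isClosed isClosed_Ici)
      inter_subset_left
  obtain ⟨⟨t0, y0⟩, ⟨⟨ht0, hy0⟩, hGt0⟩, hmin⟩ :=
    hS.exists_isMinOn ⟨(t', x'), ⟨ht', hx'⟩, hG'⟩ continuous_fst.continuousOn
  simp only at ht0 hy0
  simp only [mem_preimage, mem_Ici] at hGt0
  have hlt : ∀ s ∈ Icc a b, s < t0 → ∀ y ∈ closedBall x0 r, G (s, y) < θ := by
    intro s hs hst y hy
    by_contra! h
    have := hmin (show (s, y) ∈ K ∩ G ⁻¹' (Ici θ) from ⟨⟨hs, hy⟩, h⟩)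
    simp only [mem_ofPred_eq] at this
    linarith
  have hat : a < t0 := by
    rcases ht0.1.lt_or_eq with h | h
    · exact h
    · subst h; exact absurd hGt0 (not_le.2 (hinit y0 hy0))
  have hle : ∀ s ∈ Icc a t0, ∀ y ∈ closedBall x0 r, G (s, y) ≤ θ := by
    intro s hs y hy
    rcases hs.2.lt_or_eq with h | h
    · exact (hlt s ⟨hs.1, hs.2.trans ht0.2⟩ h y hy).le
    · subst h
      have hc : ContinuousWithinAt (fun s' : ℝ => G (s', y)) (Ioo a s) s := by
        have h1 : ContinuousWithinAt G K (s, y) := hG (s, y) ⟨ht0, hy⟩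
        refine ContinuousWithinAt.comp (f := fun s' : ℝ => (s', y)) (t := K) h1
          (by fun_prop) ?_
        intro s' hs'
        exact ⟨⟨hs'.1.le, hs'.2.le.trans ht0.2⟩, hy⟩
      have hne : (nhdsWithin s (Ioo a s)).NeBot := by
        rw [← mem_closure_iff_nhdsWithin_neBot, closure_Ioo hat.ne]
        exact ⟨hat.le, le_rfl⟩
      refine le_of_tendsto hc ?_
      filter_upwards [self_mem_nhdsWithin] with s' hs'
      exact (hlt s' ⟨hs'.1.le, hs'.2.le.trans ht0.2⟩ hs'.2 y hy).le
  have hin : y0 ∈ ball x0 r := by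
    by_contra h
    have h1 : y0 ∈ sphere x0 r := by
      simp only [mem_ball, not_lt, mem_closedBall, mem_sphere] at *
      linarith
    exact absurd hGt0 (not_le.2 (hlat t0 ht0 y0 h1))
  exact hno t0 ⟨hat, ht0.2⟩ y0 hin (le_antisymm (hle t0 ⟨hat.le, le_rfl⟩ y0 hy0) hGt0) hle

lemma second_deriv_nonpos {g g' : ℝ → ℝ} {c : ℝ} (h1 : ∀ᶠ s in nhds 0, HasDerivAt g (g' s) s)
    (h2 : HasDerivAt g' c 0) (hmax : IsLocalMax g 0) : c ≤ 0 := by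
  by_contra! hc
  have e1 : deriv g =ᶠ[nhds 0] g' := h1.mono fun s hs => hs.deriv
  have hd0 : deriv g 0 = 0 := hmax.deriv_eq_zero
  have hdd : deriv (deriv g) 0 = c := by rw [e1.deriv_eq, h2.deriv]
  have hmin := isLocalMin_of_deriv_deriv_pos (f := g) (x₀ := 0) (by rw [hdd]; exact hc) hd0
    h1.self_of_nhds.continuousAt
  have hcst : g =ᶠ[nhds 0] fun _ => g 0 := by
    filter_upwards [hmin, hmax] with s a b
    exact le_antisymm b a
  have e2 : deriv g =ᶠ[nhds 0] fun _ => 0 := by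
    have := hcst.deriv
    simpa using this
  have := e2.deriv_eq
  rw [hdd] at this
  simp at this
  linarith

lemma dv_hasDerivAt {Ω : Set (ℝ × EE n)} {F : ℝ × EE n → ℝ} (hF : Sm Ω F) {p v : ℝ × EE n} {s : ℝ}
    (hp : p + s • v ∈ Ω) : HasDerivAt (fun s : ℝ => F (p + s • v)) (dv v F (p + s • v)) s := by
  have h1 : HasDerivAt (fun s : ℝ => p + s • v) v s := by
    simpa using ((hasDerivAt_id s).smul_const v).const_add p
  exact (hF.diff hp).hasFDerivAt.comp_hasDerivAt s h1

lemma dv_lin (F : ℝ × EE n → ℝ) (p : ℝ × EE n) (ξ : Fin n → ℝ) :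
    dv (∑ i, ξ i • ev i) F p = ∑ i, ξ i * dv (ev i) F p := by
  simp [dv, map_sum]

/-- Facts at a touching point. -/
lemma touch_facts {Ω : Set (ℝ × EE n)} (hΩ : IsOpen Ω) {G : ℝ × EE n → ℝ} (hG : Sm Ω G)
    {a t : ℝ} {x0 x : EE n} {r : ℝ} (hp : (t, x) ∈ Ω) (hat : a < t) (hx : x ∈ ball x0 r)
    (hle : ∀ s ∈ Icc a t, ∀ y ∈ closedBall x0 r, G (s, y) ≤ G (t, x)) :
    0 ≤ dv (1, 0) G (t, x) ∧ (∀ i, dv (ev i) G (t, x) = 0) ∧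
      ∀ ξ : Fin n → ℝ, ∑ i, ∑ j, ξ i * ξ j * dv (ev i) (dv (ev j) G) (t, x) ≤ 0 := by
  have hsp : ∀ v : ℝ × EE n, v.1 = 0 →
      IsLocalMax (fun s : ℝ => G ((t, x) + s • v)) 0 := by
    intro v hv
    have hc : ContinuousAt (fun s : ℝ => x + s • v.2) 0 := by fun_prop
    have : ∀ᶠ s in nhds (0:ℝ), x + s • v.2 ∈ ball x0 r :=
      hc.preimage_mem_nhds (by
        simpa only [zero_smul, add_zero] using isOpen_ball.mem_nhds hx)
    filter_upwards [this] with s hs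
    have e : (t, x) + s • v = (t, x + s • v.2) := by
      ext <;> simp [hv]
    rw [e]; simp only [zero_smul, add_zero]
    exact hle t ⟨hat.le, le_rfl⟩ _ (ball_subset_closedBall hs)
  have hev : ∀ v : ℝ × EE n, ∀ᶠ s in nhds (0:ℝ), (t, x) + s • v ∈ Ω := by
    intro v
    have hc : ContinuousAt (fun s : ℝ => (t, x) + s • v) 0 := by fun_prop
    exact hc.eventually (by simpa using hΩ.mem_nhds hp)
  have hsum1 : ∀ ξ : Fin n → ℝ, (∑ i, ξ i • ev i : ℝ × EE n).1 = 0 := by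
    intro ξ; simp [Prod.fst_sum, ev]
  refine ⟨?_, ?_, ?_⟩
  · have h0 : (t, x) + (0:ℝ) • ((1, 0) : ℝ × EE n) ∈ Ω := by simpa using hp
    have hd := dv_hasDerivAt hG h0
    simp only [zero_smul, add_zero] at hd
    by_contra! hneg
    have hsl := (hasDerivAt_iff_tendsto_slope.1 hd).eventually (gt_mem_nhds hneg)
    have hsl' : ∀ᶠ s in nhdsWithin (0:ℝ) (Iio 0),
        slope (fun s : ℝ => G ((t, x) + s • ((1, 0) : ℝ × EE n))) 0 s < 0 :=
      hsl.filter_mono (nhdsWithin_mono _ (fun s hs => ne_of_lt hs))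
    have hm : ∀ᶠ s in nhdsWithin (0:ℝ) (Iio 0), s ∈ Ioo (a - t) 0 :=
      Ioo_mem_nhdsLT (by linarith)
    obtain ⟨s, hs1, hs2⟩ := (hsl'.and hm).exists
    rw [slope_def_field] at hs1
    have e : (t, x) + s • ((1, 0) : ℝ × EE n) = (t + s, x) := by ext <;> simp
    simp only [e, zero_smul, add_zero, sub_zero] at hs1
    have := hle (t + s) ⟨by linarith [hs2.1], by linarith [hs2.2]⟩ x (ball_subset_closedBall hx)
    have h3 : 0 ≤ (G (t + s, x) - G (t, x)) / s :=
      div_nonneg_of_nonpos (by linarith) hs2.2.le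
    linarith
  · intro i
    have h0 : (t, x) + (0:ℝ) • (ev i : ℝ × EE n) ∈ Ω := by simpa using hp
    have hd := dv_hasDerivAt hG h0
    simp only [zero_smul, add_zero] at hd
    rw [← hd.deriv]
    exact (hsp (ev i) rfl).deriv_eq_zero
  · intro ξ
    set v : ℝ × EE n := ∑ i, ξ i • ev i with hv
    have h0 : (t, x) + (0:ℝ) • v ∈ Ω := by simpa using hp
    have hd2 := dv_hasDerivAt (hG.dv v) h0
    have := second_deriv_nonpos ((hev v).mono fun s hs => dv_hasDerivAt hG hs) hd2
      (hsp v (hsum1 ξ))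
    simp only [zero_smul, add_zero] at this
    refine le_trans (le_of_eq ?_) this
    have e1 : dv v G = ∑ j, ξ j • dv (ev j) G := by
      ext q; rw [hv, dv_lin]; simp
    rw [hv, dv_lin, ← hv, e1]
    refine Finset.sum_congr rfl fun i _ => ?_
    rw [dv_sum Finset.univ (fun j _ => (hG.dv _).smul (ξ j)) hp, Finset.mul_sum]
    refine Finset.sum_congr rfl fun j _ => ?_
    rw [dv_smul _ (hG.dv _) hp]; ring

end maxprinciple

section matrix
variable {n : ℕ}

/-- The coefficient matrix. -/
noncomputable def aM (P : Fin n → ℝ) (i j : Fin n) : ℝ :=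
  (if i = j then (1 : ℝ) else 0) - P i * P j / (1 + ∑ k, P k ^ 2)

/-- Bilinear form of a matrix. -/
noncomputable def bil (a : Fin n → Fin n → ℝ) (ξ ζ : Fin n → ℝ) : ℝ :=
  ∑ i, ∑ j, a i j * (ξ i * ζ j)

lemma aM_symm (P : Fin n → ℝ) (i j : Fin n) : aM P i j = aM P j i := by
  unfold aM
  simp only [eq_comm (a := i) (b := j), mul_comm (P i) (P j)]

lemma Qpos (P : Fin n → ℝ) : 0 < 1 + ∑ k, P k ^ 2 := by positivity

lemma aM_form (P ξ ζ : Fin n → ℝ) : bil (aM P) ξ ζ =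
    ∑ i, ξ i * ζ i - (∑ i, P i * ξ i) * (∑ j, P j * ζ j) * (1 + ∑ k, P k ^ 2)⁻¹ := by
  unfold bil aM
  simp only [sub_mul, Finset.sum_sub_distrib]
  congr 1
  · refine Finset.sum_congr rfl fun i _ => ?_
    simp
  · rw [Finset.sum_mul_sum, Finset.sum_mul]
    refine Finset.sum_congr rfl fun i _ => ?_
    rw [Finset.sum_mul]
    refine Finset.sum_congr rfl fun j _ => ?_
    rw [div_eq_mul_inv]; ring

lemma aM_lower (P ξ : Fin n → ℝ) :
    (1 + ∑ k, P k ^ 2)⁻¹ * ∑ i, ξ i ^ 2 ≤ bil (aM P) ξ ξ := by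
  rw [aM_form]
  have hQ := Qpos P
  have hcs := Finset.sum_mul_sq_le_sq_mul_sq Finset.univ P ξ
  set q := ∑ k, P k ^ 2
  set x := ∑ i, ξ i ^ 2
  set m := ∑ i, P i * ξ i
  have e : ∑ i, ξ i * ξ i = x := Finset.sum_congr rfl fun i _ => by ring
  rw [e]
  have hW : 0 < (1 + q)⁻¹ := inv_pos.2 hQ
  have h1 : (1 + q)⁻¹ * (1 + q) = 1 := inv_mul_cancel₀ hQ.ne'
  have h2 : x = (1 + q)⁻¹ * (1 + q) * x := by rw [h1, one_mul]
  have := mul_le_mul_of_nonneg_left hcs hW.le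
  nlinarith

lemma aM_nonneg (P ξ : Fin n → ℝ) : 0 ≤ bil (aM P) ξ ξ :=
  le_trans (by have := Qpos P; positivity) (aM_lower P ξ)

lemma aM_upper (P ξ : Fin n → ℝ) : bil (aM P) ξ ξ ≤ ∑ i, ξ i ^ 2 := by
  rw [aM_form]
  have hQ := Qpos P
  have e : ∑ i, ξ i * ξ i = ∑ i, ξ i ^ 2 := Finset.sum_congr rfl fun i _ => by ring
  rw [e]
  have : 0 ≤ (∑ i, P i * ξ i) * (∑ j, P j * ξ j) * (1 + ∑ k, P k ^ 2)⁻¹ := by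
    rw [← pow_two]; positivity
  linarith

lemma aM_trace (P : Fin n → ℝ) : ∑ i, aM P i i ≤ n := by
  have : ∀ i, aM P i i ≤ 1 := by
    intro i
    unfold aM
    have hQ := Qpos P
    have : 0 ≤ P i * P i / (1 + ∑ k, P k ^ 2) := by rw [← pow_two]; positivity
    simp only [if_true]; linarith
  calc ∑ i, aM P i i ≤ ∑ _i : Fin n, (1:ℝ) := Finset.sum_le_sum fun i _ => this i
    _ = n := by simp

lemma bil_smul_sub (a : Fin n → Fin n → ℝ) (ha : ∀ i j, a i j = a j i) (ξ ζ : Fin n → ℝ)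
    (α β : ℝ) : bil a (fun i => α * ξ i + β * ζ i) (fun i => α * ξ i + β * ζ i)
      = α ^ 2 * bil a ξ ξ + 2 * α * β * bil a ξ ζ + β ^ 2 * bil a ζ ζ := by
  have hs : bil a ζ ξ = bil a ξ ζ := by
    unfold bil
    rw [Finset.sum_comm]
    refine Finset.sum_congr rfl fun i _ => Finset.sum_congr rfl fun j _ => ?_
    rw [ha j i]; ring
  have : bil a (fun i => α * ξ i + β * ζ i) (fun i => α * ξ i + β * ζ i)
      = α ^ 2 * bil a ξ ξ + α * β * bil a ξ ζ + α * β * bil a ζ ξ + β ^ 2 * bil a ζ ζ := by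
    unfold bil
    simp only [Finset.mul_sum, ← Finset.sum_add_distrib]
    exact Finset.sum_congr rfl fun i _ => Finset.sum_congr rfl fun j _ => by ring
  rw [this, hs]; ring

lemma aM_young (P ξ ζ : Fin n → ℝ) (α β : ℝ) :
    -(2 * α * β * bil (aM P) ξ ζ) ≤ α ^ 2 * bil (aM P) ξ ξ + β ^ 2 * bil (aM P) ζ ζ := by
  have := aM_nonneg P (fun i => α * ξ i + β * ζ i)
  rw [bil_smul_sub _ (aM_symm P)] at this
  linarith

/-- Cauchy-Schwarz for linear combinations. -/
lemma aM_comb (P c : Fin n → ℝ) (X : Fin n → Fin n → ℝ) :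
    bil (aM P) (fun i => ∑ k, c k * X k i) (fun i => ∑ k, c k * X k i)
      ≤ (∑ k, c k ^ 2) * ∑ k, bil (aM P) (X k) (X k) := by
  set s : Fin n → ℝ := fun i => ∑ k, c k * X k i
  set q := ∑ k, c k ^ 2
  -- sum over k of the form at (X k - c k • s / λ)
  have hlin : bil (aM P) s s = ∑ k, c k * bil (aM P) (X k) s := by
    unfold bil
    simp only [Finset.mul_sum]
    rw [Finset.sum_comm (s := Finset.univ) (t := Finset.univ) (f := fun k i => ∑ j, _)]
    refine Finset.sum_congr rfl fun i _ => ?_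
    rw [Finset.sum_comm]
    refine Finset.sum_congr rfl fun j _ => ?_
    simp only [s, Finset.sum_mul, Finset.mul_sum]
    rw [Finset.sum_comm]
    refine Finset.sum_congr rfl fun k _ => Finset.sum_congr rfl fun l _ => ?_
    ring
  have h1 : ∀ k, 2 * q * c k * bil (aM P) (X k) s
      ≤ q ^ 2 * bil (aM P) (X k) (X k) + c k ^ 2 * bil (aM P) s s := by
    intro k
    have := aM_young P (X k) s q (- c k)
    linarith
  have h2 := Finset.sum_le_sum (s := Finset.univ) fun k _ => h1 k
  rw [Finset.sum_add_distrib, ← Finset.mul_sum, ← Finset.sum_mul] at h2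
  have h3 : ∑ k, 2 * q * c k * bil (aM P) (X k) s = 2 * q * bil (aM P) s s := by
    have e := Finset.mul_sum Finset.univ (fun k => c k * bil (aM P) (X k) s) (2 * q)
    rw [hlin, e]
    exact Finset.sum_congr rfl fun k _ => by ring
  rw [h3] at h2
  have hq : 0 ≤ q := by positivity
  rcases hq.lt_or_eq with hq | hq
  · have : q * bil (aM P) s s ≤ q * (q * ∑ k, bil (aM P) (X k) (X k)) := by
      change _ ≤ q ^ 2 * _ + q * _ at h2
      nlinarith
    exact le_of_mul_le_mul_left this hq
  · have hc : ∀ k, c k = 0 := by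
      intro k
      have := (Finset.sum_eq_zero_iff_of_nonneg (fun i _ => sq_nonneg (c i))).1 hq.symm k
        (Finset.mem_univ k)
      simpa using this
    have : bil (aM P) s s = 0 := by
      rw [hlin]; simp [hc]
    rw [this, ← hq]; simp

lemma aM_nsd (P : Fin n → ℝ) (H : Fin n → Fin n → ℝ)
    (hH : ∀ ξ : Fin n → ℝ, ∑ i, ∑ j, ξ i * ξ j * H i j ≤ 0) :
    ∑ i, ∑ j, aM P i j * H i j ≤ 0 := by
  have hQ := Qpos P
  set q := ∑ k, P k ^ 2 with hq
  set v := Real.sqrt (1 + q) with hv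
  have hv2 : v ^ 2 = 1 + q := Real.sq_sqrt hQ.le
  have hv0 : 0 < v := Real.sqrt_pos.2 hQ
  set c := 1 / (v * (v + 1)) with hc
  have hcc : 2 * c - c ^ 2 * q = 1 / (1 + q) := by
    have : q = v ^ 2 - 1 := by linarith
    rw [← hv2, this, hc]; field_simp; ring
  let b : Fin n → Fin n → ℝ := fun k i => (if k = i then 1 else 0) - c * (P k * P i)
  have hb : ∀ i j, aM P i j = ∑ k, b k i * b k j := by
    intro i j
    have e : ∀ k, b k i * b k j = (if k = i then (if k = j then (1:ℝ) else 0) else 0)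
        - (if k = i then c * (P k * P j) else 0) - (if k = j then c * (P k * P i) else 0)
        + c ^ 2 * (P i * P j) * P k ^ 2 := by
      intro k
      simp only [b]
      split_ifs <;> ring
    simp only [e, Finset.sum_add_distrib, Finset.sum_sub_distrib, Finset.sum_ite_eq',
      Finset.mem_univ, if_true, ← Finset.mul_sum, ← hq]
    unfold aM
    rw [← hq, div_eq_mul_one_div, ← hcc]
    split_ifs <;> ring
  have : ∑ i, ∑ j, aM P i j * H i j = ∑ k, ∑ i, ∑ j, b k i * b k j * H i j := by
    rw [Finset.sum_comm (s := Finset.univ) (t := Finset.univ) (f := fun k i => ∑ j, _)]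
    refine Finset.sum_congr rfl fun i _ => ?_
    rw [Finset.sum_comm]
    refine Finset.sum_congr rfl fun j _ => ?_
    rw [hb, Finset.sum_mul]
  rw [this]
  exact Finset.sum_nonpos fun k _ => hH (b k)

lemma AA_eq_bil {a : Fin n → Fin n → ℝ} {F G : ℝ × EE n → ℝ} {p : ℝ × EE n} :
    AA a F G p = bil a (fun i => dv (ev i) F p) (fun j => dv (ev j) G p) := rfl

/-- Maximum principle in touching form. -/
lemma max_principle {Ω : Set (ℝ × EE n)} (hΩ : IsOpen Ω) {G : ℝ × EE n → ℝ} (hG : Sm Ω G)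
    (P : ℝ × EE n → Fin n → ℝ) {a b θ : ℝ} {x0 : EE n} {r : ℝ}
    (hGc : ContinuousOn G (Icc a b ×ˢ closedBall x0 r))
    (hsub : Ioc a b ×ˢ ball x0 r ⊆ Ω)
    (hinit : ∀ x ∈ closedBall x0 r, G (a, x) < θ)
    (hlat : ∀ t ∈ Icc a b, ∀ x ∈ sphere x0 r, G (t, x) < θ)
    (hno : ∀ p ∈ Ioc a b ×ˢ ball x0 r, G p = θ → (∀ i, dv (ev i) G p = 0) →
      PP (aM (P p)) G p < 0) :
    ∀ t ∈ Icc a b, ∀ x ∈ closedBall x0 r, G (t, x) < θ := by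
  refine first_touch hGc hinit hlat ?_
  intro t ht x hx hθ hle
  have hp : (t, x) ∈ Ω := hsub ⟨ht, hx⟩
  obtain ⟨h1, h2, h3⟩ := touch_facts hΩ hG hp ht.1 hx (by rw [hθ]; exact hle)
  have h4 := hno (t, x) ⟨ht, hx⟩ hθ h2
  have h5 := aM_nsd (P (t, x)) _ h3
  unfold PP at h4
  linarith

end matrix

section pde
variable {n : ℕ}

/-- Spatial gradient as a vector of partials. -/
noncomputable def gr (u : ℝ × EE n → ℝ) (p : ℝ × EE n) (i : Fin n) : ℝ := dv (ev i) u p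

/-- Hessian entries. -/
noncomputable def hs (u : ℝ × EE n → ℝ) (p : ℝ × EE n) (i j : Fin n) : ℝ :=
  dv (ev i) (dv (ev j) u) p

/-- Squared gradient length plus one. -/
noncomputable def Qf (u : ℝ × EE n → ℝ) : ℝ × EE n → ℝ :=
  (fun _ => 1) + ∑ k, (dv (ev k) u) ^ 2

/-- Its inverse. -/
noncomputable def Wf (u : ℝ × EE n → ℝ) : ℝ × EE n → ℝ := (Qf u)⁻¹

/-- The coefficients as functions. -/
noncomputable def aF (u : ℝ × EE n → ℝ) (i j : Fin n) : ℝ × EE n → ℝ :=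
  (fun _ => if i = j then 1 else 0) - dv (ev i) u * dv (ev j) u * Wf u

lemma Qf_apply (u : ℝ × EE n → ℝ) (p) : Qf u p = 1 + ∑ k, gr u p k ^ 2 := by
  simp [Qf, gr]
lemma Qf_pos (u : ℝ × EE n → ℝ) (p) : 0 < Qf u p := by rw [Qf_apply]; positivity
lemma Wf_apply (u : ℝ × EE n → ℝ) (p) : Wf u p = (1 + ∑ k, gr u p k ^ 2)⁻¹ := by
  simp [Wf, Qf_apply]
lemma Wf_pos (u : ℝ × EE n → ℝ) (p) : 0 < Wf u p := by rw [Wf_apply]; positivity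
lemma aF_apply (u : ℝ × EE n → ℝ) (i j p) : aF u i j p = aM (gr u p) i j := by
  simp only [aF, aM, Pi.sub_apply, Pi.mul_apply, Wf_apply, div_eq_mul_inv]; rfl

variable {Ω : Set (ℝ × EE n)} {u g R : ℝ × EE n → ℝ} {p v w : ℝ × EE n}

lemma Sm.Qf (hu : Sm Ω u) : Sm Ω (Qf u) :=
  (Sm.const 1).add (Sm.sum _ fun k _ => (hu.dv _).pow 2)
lemma Sm.Wf (hu : Sm Ω u) : Sm Ω (Wf u) := hu.Qf.inv fun p _ => (Qf_pos u p).ne'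
lemma Sm.aF (hu : Sm Ω u) (i j) : Sm Ω (aF u i j) :=
  (Sm.const _).sub (((hu.dv _).mul (hu.dv _)).mul hu.Wf)

lemma dv_sq (hg : Sm Ω g) (hp : p ∈ Ω) : dv v (g ^ 2) p = 2 * g p * dv v g p := by
  rw [pow_two, dv_mul hg hg hp]; ring

lemma dv_Qf (hu : Sm Ω u) (hp : p ∈ Ω) (k : Fin n) :
    dv (ev k) (Qf u) p = 2 * ∑ m, gr u p m * hs u p k m := by
  unfold Qf
  rw [dv_add (Sm.const 1) (Sm.sum _ fun _ _ => (hu.dv _).pow 2) hp, dv_const,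
    dv_sum _ (fun _ _ => (hu.dv _).pow 2) hp, zero_add, Finset.mul_sum]
  refine Finset.sum_congr rfl fun m _ => ?_
  rw [dv_sq (hu.dv _) hp]; simp only [gr, hs]; ring

lemma dv_Wf (hu : Sm Ω u) (hp : p ∈ Ω) (k : Fin n) :
    dv (ev k) (Wf u) p = - 2 * (Wf u p) ^ 2 * ∑ m, gr u p m * hs u p k m := by
  have h := dv_inv (v := ev k) hu.Qf (fun p _ => (Qf_pos u p).ne') hp
  rw [dv_Qf hu hp] at h
  unfold Wf
  rw [h]
  simp only [Pi.inv_apply]; ring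

lemma dv_aF (hu : Sm Ω u) (hp : p ∈ Ω) (i j k : Fin n) :
    dv (ev k) (aF u i j) p = -(hs u p k i * gr u p j * Wf u p + gr u p i * hs u p k j * Wf u p
      - 2 * gr u p i * gr u p j * Wf u p ^ 2 * ∑ m, gr u p m * hs u p k m) := by
  unfold aF
  rw [dv_sub (Sm.const _) (((hu.dv _).mul (hu.dv _)).mul hu.Wf) hp, dv_const,
    dv_mul ((hu.dv _).mul (hu.dv _)) hu.Wf hp, dv_mul (hu.dv _) (hu.dv _) hp, dv_Wf hu hp]
  simp only [Pi.mul_apply, gr, hs]; ring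

lemma hs_symm (hu : Sm Ω u) (hp : p ∈ Ω) (i j : Fin n) : hs u p i j = hs u p j i := dv_comm hu hp

/-- Differentiating the equation. -/
lemma PP_dv (hΩ : IsOpen Ω) (hu : Sm Ω u) (hg : Sm Ω g) 
    (hR : ∀ p ∈ Ω, PP (aM (gr u p)) g p = R p) (hRs : Sm Ω R) (hp : p ∈ Ω) (k : Fin n) :
    PP (aM (gr u p)) (dv (ev k) g) p
      = dv (ev k) R p + ∑ i, ∑ j, hs g p i j * dv (ev k) (aF u i j) p := by
  have hS : Sm Ω (∑ i, ∑ j, aF u i j * dv (ev i) (dv (ev j) g)) :=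
    Sm.sum _ fun i _ => Sm.sum _ fun j _ => (hu.aF i j).mul ((hg.dv _).dv _)
  have h1 : ∀ q ∈ Ω, dv (1, 0) g q = (R + ∑ i, ∑ j, aF u i j * dv (ev i) (dv (ev j) g)) q := by
    intro q hq
    have := hR q hq
    unfold PP at this
    simp only [Pi.add_apply, Finset.sum_apply, Pi.mul_apply, aF_apply]
    linarith
  have h2 := dv_congr (v := ev k) hΩ h1 hp
  rw [dv_comm hg hp, dv_add hRs hS hp,
    dv_sum _ (fun i _ => Sm.sum _ fun j _ => (hu.aF i j).mul ((hg.dv _).dv _)) hp] at h2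
  unfold PP
  rw [h2]
  have h3 : ∀ i j, dv (ev i) (dv (ev j) (dv (ev k) g)) p
      = dv (ev k) (dv (ev i) (dv (ev j) g)) p := by
    intro i j
    rw [dv_congr (F := dv (ev j) (dv (ev k) g)) hΩ (fun q hq => dv_comm hg hq) hp,
      dv_comm (hg.dv _) hp]
  have h4 : ∀ i, dv (ev k) (∑ j, aF u i j * dv (ev i) (dv (ev j) g)) p =
      ∑ j, (aM (gr u p) i j * dv (ev i) (dv (ev j) (dv (ev k) g)) p +
        hs g p i j * dv (ev k) (aF u i j) p) := by
    intro i
    rw [dv_sum _ (fun j _ => (hu.aF i j).mul ((hg.dv _).dv _)) hp]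
    refine Finset.sum_congr rfl fun j _ => ?_
    rw [dv_mul (hu.aF i j) ((hg.dv _).dv _) hp, h3, aF_apply]; rfl
  simp only [h4, Finset.sum_add_distrib]
  ring

lemma alg_grad (P : Fin n → ℝ) (H : Fin n → Fin n → ℝ) (hH : ∀ i j, H i j = H j i) (W : ℝ) :
    ∑ k, P k * ∑ i, ∑ j, H i j * -(H k i * P j * W + P i * H k j * W
      - 2 * P i * P j * W ^ 2 * ∑ m, P m * H k m)
    = -2 * W * (∑ k, (∑ m, P m * H k m) * (∑ m, P m * H k m)
      - (∑ k, P k * ∑ m, P m * H k m) * (∑ k, P k * ∑ m, P m * H k m) * W) := by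
  set s : Fin n → ℝ := fun k => ∑ m, P m * H k m with hs
  have e0 : ∀ k, ∑ m, P m * H k m = s k := fun k => rfl
  simp only [e0]
  have e1 : ∀ k, ∑ i, ∑ j, H i j * -(H k i * P j * W + P i * H k j * W
      - 2 * P i * P j * W ^ 2 * s k)
      = -2 * W * (∑ i, H k i * s i) + 2 * W ^ 2 * s k * ∑ i, P i * s i := by
    intro k
    have t1 : ∑ i, ∑ j, H i j * (H k i * P j) = ∑ i, H k i * s i := by
      refine Finset.sum_congr rfl fun i _ => ?_
      rw [hs, Finset.mul_sum]
      exact Finset.sum_congr rfl fun j _ => by ring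
    have t2 : ∑ i, ∑ j, H i j * (P i * H k j) = ∑ i, H k i * s i := by
      rw [Finset.sum_comm]
      refine Finset.sum_congr rfl fun i _ => ?_
      rw [hs, Finset.mul_sum]
      exact Finset.sum_congr rfl fun j _ => by rw [hH j i]; ring
    have t3 : ∑ i, ∑ j, H i j * (P i * P j) = ∑ i, P i * s i := by
      refine Finset.sum_congr rfl fun i _ => ?_
      rw [hs, Finset.mul_sum]
      exact Finset.sum_congr rfl fun j _ => by ring
    have t4 : ∑ i, ∑ j, H i j * -(H k i * P j * W + P i * H k j * W
      - 2 * P i * P j * W ^ 2 * s k)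
      = -W * ∑ i, ∑ j, H i j * (H k i * P j) - W * ∑ i, ∑ j, H i j * (P i * H k j)
        + 2 * W ^ 2 * s k * ∑ i, ∑ j, H i j * (P i * P j) := by
      simp only [Finset.mul_sum, ← Finset.sum_add_distrib, ← Finset.sum_sub_distrib]
      exact Finset.sum_congr rfl fun i _ => Finset.sum_congr rfl fun j _ => by ring
    rw [t4, t1, t2, t3]; ring
  simp only [e1]
  have e2 : ∑ k, P k * ∑ i, H k i * s i = ∑ k, s k * s k := by
    simp only [Finset.mul_sum]
    rw [Finset.sum_comm]
    refine Finset.sum_congr rfl fun i _ => ?_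
    conv_rhs => rw [← e0 i, Finset.sum_mul]
    exact Finset.sum_congr rfl fun j _ => by rw [hH j i]; ring
  have e3 : ∀ k, P k * (-2 * W * (∑ i, H k i * s i) + 2 * W ^ 2 * s k * ∑ i, P i * s i)
      = -2 * W * (P k * ∑ i, H k i * s i) + 2 * W ^ 2 * (∑ i, P i * s i) * (P k * s k) := by
    intro k; ring
  simp only [e3, Finset.sum_add_distrib, ← Finset.mul_sum, e2]
  ring

/-- The evolution of the squared gradient. -/
lemma PP_Qf (hΩ : IsOpen Ω) (hu : Sm Ω u) (hpde : ∀ p ∈ Ω, PP (aM (gr u p)) u p = 0)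
    (hp : p ∈ Ω) :
    PP (aM (gr u p)) (Qf u) p = - Wf u p * AA (aM (gr u p)) (Qf u) (Qf u) p
      - 2 * ∑ k, AA (aM (gr u p)) (dv (ev k) u) (dv (ev k) u) p := by
  have hk : ∀ k, PP (aM (gr u p)) (dv (ev k) u) p
      = ∑ i, ∑ j, hs u p i j * dv (ev k) (aF u i j) p := by
    intro k
    rw [PP_dv (R := fun _ => 0) hΩ hu hu hpde (Sm.const 0) hp, dv_const, zero_add]
  have h1 : PP (aM (gr u p)) (Qf u) p
      = 2 * ∑ k, gr u p k * PP (aM (gr u p)) (dv (ev k) u) p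
        - 2 * ∑ k, AA (aM (gr u p)) (dv (ev k) u) (dv (ev k) u) p := by
    unfold Qf
    rw [PP_add hΩ (Sm.const 1) (Sm.sum _ fun k _ => (hu.dv _).pow 2) hp, PP_const,
      PP_sum hΩ _ (fun k => (hu.dv _).pow 2) hp, zero_add, Finset.mul_sum, Finset.mul_sum,
      ← Finset.sum_sub_distrib]
    refine Finset.sum_congr rfl fun k _ => ?_
    rw [PP_sq hΩ (aM_symm _) (hu.dv _) hp]
    simp only [gr]; ring
  rw [h1]
  simp only [hk, dv_aF hu hp]
  rw [alg_grad _ _ (hs_symm hu hp)]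
  congr 1
  rw [AA_eq_bil, aM_form, ← Wf_apply]
  simp only [dv_Qf hu hp]
  have e1 : ∀ s : Fin n → ℝ, ∑ i, 2 * s i * (2 * s i) = 4 * ∑ i, s i * s i := by
    intro s; rw [Finset.mul_sum]; exact Finset.sum_congr rfl fun j _ => by ring
  have e2 : ∀ s : Fin n → ℝ, ∑ i, gr u p i * (2 * s i) = 2 * ∑ i, gr u p i * s i := by
    intro s; rw [Finset.mul_sum]; exact Finset.sum_congr rfl fun j _ => by ring
  rw [e1 (fun k => ∑ m, gr u p m * hs u p k m), e2 (fun k => ∑ m, gr u p m * hs u p k m)]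
  ring

lemma PP_Qf_le1 (hΩ : IsOpen Ω) (hu : Sm Ω u) (hpde : ∀ p ∈ Ω, PP (aM (gr u p)) u p = 0)
    (hp : p ∈ Ω) :
    PP (aM (gr u p)) (Qf u) p ≤ - (3 / 2) * Wf u p * AA (aM (gr u p)) (Qf u) (Qf u) p := by
  rw [PP_Qf hΩ hu hpde hp]
  have h := aM_comb (gr u p) (fun k => 2 * gr u p k) (fun k i => dv (ev i) (dv (ev k) u) p)
  have e : (fun i => ∑ k, 2 * gr u p k * dv (ev i) (dv (ev k) u) p)
      = fun i => dv (ev i) (Qf u) p := by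
    ext i
    rw [dv_Qf hu hp, Finset.mul_sum]
    exact Finset.sum_congr rfl fun j _ => by simp only [hs]; ring
  rw [e, ← AA_eq_bil] at h
  simp only [← AA_eq_bil] at h
  have e2 : ∑ k, (2 * gr u p k) ^ 2 = 4 * (Qf u p - 1) := by
    rw [Qf_apply, add_sub_cancel_left, Finset.mul_sum]
    exact Finset.sum_congr rfl fun j _ => by ring
  rw [e2] at h
  set S := ∑ k, AA (aM (gr u p)) (dv (ev k) u) (dv (ev k) u) p
  have hS : 0 ≤ S := Finset.sum_nonneg fun k _ => aM_nonneg _ _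
  have hW := Wf_pos u p
  have hQW : Wf u p * Qf u p = 1 := inv_mul_cancel₀ (Qf_pos u p).ne'
  have : Wf u p * AA (aM (gr u p)) (Qf u) (Qf u) p ≤ 4 * S := by
    calc Wf u p * AA (aM (gr u p)) (Qf u) (Qf u) p
        ≤ Wf u p * (4 * (Qf u p - 1) * S) := by gcongr
      _ = 4 * S * (Wf u p * Qf u p) - 4 * (Wf u p * S) := by ring
      _ ≤ 4 * S := by rw [hQW]; nlinarith [mul_nonneg hW.le hS]
  linarith

lemma PP_Qf_le2 (hΩ : IsOpen Ω) (hu : Sm Ω u) (hpde : ∀ p ∈ Ω, PP (aM (gr u p)) u p = 0)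
    (hp : p ∈ Ω) :
    PP (aM (gr u p)) (Qf u) p ≤ - 2 * Wf u p * ∑ i, ∑ j, hs u p i j ^ 2 := by
  rw [PP_Qf hΩ hu hpde hp]
  have hW := Wf_pos u p
  have h1 : 0 ≤ Wf u p * AA (aM (gr u p)) (Qf u) (Qf u) p :=
    mul_nonneg hW.le (aM_nonneg _ _)
  have h2 : Wf u p * ∑ i, ∑ j, hs u p i j ^ 2
      ≤ ∑ k, AA (aM (gr u p)) (dv (ev k) u) (dv (ev k) u) p := by
    rw [Finset.sum_comm, Finset.mul_sum]
    refine Finset.sum_le_sum fun k _ => ?_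
    have := aM_lower (gr u p) (fun i => dv (ev i) (dv (ev k) u) p)
    rw [← Wf_apply] at this
    exact this
  linarith

end pde

section hessian
variable {n : ℕ} {Ω : Set (ℝ × EE n)} {u F G : ℝ × EE n → ℝ} {p : ℝ × EE n}

/-- Pointwise bounds on a function and its first and second spatial derivatives. -/
def Bd (F : ℝ × EE n → ℝ) (p : ℝ × EE n) (b0 b1 b2 : ℝ) : Prop :=
  |F p| ≤ b0 ∧ (∀ k, |dv (ev k) F p| ≤ b1) ∧ ∀ l k, |dv (ev l) (dv (ev k) F) p| ≤ b2

lemma dv_dv_mul (hΩ : IsOpen Ω) (hF : Sm Ω F) (hG : Sm Ω G) (hp : p ∈ Ω) (l k : Fin n) :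
    dv (ev l) (dv (ev k) (F * G)) p
      = F p * dv (ev l) (dv (ev k) G) p + dv (ev k) G p * dv (ev l) F p
        + (G p * dv (ev l) (dv (ev k) F) p + dv (ev k) F p * dv (ev l) G p) := by
  rw [dv_congr (G := F * dv (ev k) G + G * dv (ev k) F) hΩ (fun q hq => by
      simp [dv_mul hF hG hq]) hp, dv_add (hF.mul (hG.dv _)) (hG.mul (hF.dv _)) hp,
      dv_mul hF (hG.dv _) hp, dv_mul hG (hF.dv _) hp]

lemma abs_mul_le' {a b A B : ℝ} (ha : |a| ≤ A) (hb : |b| ≤ B) : |a * b| ≤ A * B := by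
  rw [abs_mul]; exact mul_le_mul ha hb (abs_nonneg _) ((abs_nonneg _).trans ha)

lemma Bd.mul (hΩ : IsOpen Ω) (hF : Sm Ω F) (hG : Sm Ω G) (hp : p ∈ Ω) {b0 b1 b2 c0 c1 c2 : ℝ}
    (h1 : Bd F p b0 b1 b2) (h2 : Bd G p c0 c1 c2) :
    Bd (F * G) p (b0 * c0) (b0 * c1 + c0 * b1) (b0 * c2 + c1 * b1 + (c0 * b2 + b1 * c1)) := by
  refine ⟨abs_mul_le' h1.1 h2.1, fun k => ?_, fun l k => ?_⟩
  · rw [dv_mul hF hG hp]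
    exact (abs_add_le _ _).trans
      (add_le_add (abs_mul_le' h1.1 (h2.2.1 k)) (abs_mul_le' h2.1 (h1.2.1 k)))
  · rw [dv_dv_mul hΩ hF hG hp]
    exact (abs_add_le _ _).trans (add_le_add
      ((abs_add_le _ _).trans
        (add_le_add (abs_mul_le' h1.1 (h2.2.2 l k)) (abs_mul_le' (h2.2.1 k) (h1.2.1 l))))
      ((abs_add_le _ _).trans
        (add_le_add (abs_mul_le' h2.1 (h1.2.2 l k)) (abs_mul_le' (h1.2.1 k) (h2.2.1 l)))))

lemma abs_sum_le' {c : ℝ} (f : Fin n → ℝ) (h : ∀ i, |f i| ≤ c) : |∑ i, f i| ≤ n * c := by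
  refine (Finset.abs_sum_le_sum_abs _ _).trans ?_
  refine (Finset.sum_le_sum fun i _ => h i).trans ?_
  simp

lemma Bd_Wf (hΩ : IsOpen Ω) (hu : Sm Ω u) (hp : p ∈ Ω) {H T : ℝ}
    (hg : ∀ i, |gr u p i| ≤ 1) (hH : ∀ i j, |dv (ev i) (dv (ev j) u) p| ≤ H)
    (hT : ∀ i j k, |dv (ev i) (dv (ev j) (dv (ev k) u)) p| ≤ T) :
    Bd (Wf u) p 1 (2 * n * H) (8 * n ^ 2 * H ^ 2 + 2 * n * T + 2 * n * H ^ 2) := by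
  have hQ1 : 1 ≤ Qf u p := by
    rw [Qf_apply]
    have : 0 ≤ ∑ k, gr u p k ^ 2 := by positivity
    linarith
  have hW1 : Wf u p ≤ 1 := inv_le_one_of_one_le₀ hQ1
  have hW0 := Wf_pos u p
  have hWa : |Wf u p| ≤ 1 := by rw [abs_of_pos hW0]; exact hW1
  have hQk : ∀ k, |dv (ev k) (Qf u) p| ≤ 2 * n * H := by
    intro k
    rw [dv_Qf hu hp, abs_mul, abs_two]
    have := abs_sum_le' (fun m => gr u p m * hs u p k m)
      (fun m => (abs_mul_le' (hg m) (hH k m)).trans_eq (one_mul _))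
    nlinarith
  have hQlk : ∀ l k, |dv (ev l) (dv (ev k) (Qf u)) p| ≤ 2 * n * T + 2 * n * H ^ 2 := by
    intro l k
    have hS : ∀ m, Sm Ω (dv (ev m) u * dv (ev k) (dv (ev m) u)) :=
      fun m => (hu.dv _).mul ((hu.dv _).dv _)
    rw [dv_congr (G := (2:ℝ) • ∑ m, dv (ev m) u * dv (ev k) (dv (ev m) u)) hΩ (fun q hq => by
      rw [dv_Qf hu hq]; simp [gr, hs]) hp, dv_smul _ (Sm.sum _ fun m _ => hS m) hp,
      dv_sum _ (fun m _ => hS m) hp, abs_mul, abs_two]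
    have := abs_sum_le' (c := 1 * T + H * H)
      (fun m => dv (ev l) (dv (ev m) u * dv (ev k) (dv (ev m) u)) p)
      (fun m => by
        rw [dv_mul (hu.dv _) ((hu.dv _).dv _) hp]
        exact (abs_add_le _ _).trans
          (add_le_add (abs_mul_le' (hg m) (hT l k m)) (abs_mul_le' (hH k m) (hH l m))))
    nlinarith
  have hd : ∀ k, ∀ q ∈ Ω, dv (ev k) (Wf u) q = ((-1 : ℝ) • (Wf u * Wf u * dv (ev k) (Qf u))) q := by
    intro k q hq
    rw [Wf, dv_inv hu.Qf (fun p _ => (Qf_pos u p).ne') hq]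
    simp only [Pi.smul_apply, Pi.mul_apply, Pi.inv_apply, smul_eq_mul]; ring
  have hWk : ∀ k, |dv (ev k) (Wf u) p| ≤ 2 * n * H := by
    intro k
    rw [hd k p hp]
    simp only [Pi.smul_apply, Pi.mul_apply, smul_eq_mul, neg_one_mul, abs_neg]
    simpa using abs_mul_le' (abs_mul_le' hWa hWa) (hQk k)
  refine ⟨hWa, hWk, fun l k => ?_⟩
  rw [dv_congr hΩ (hd k) hp, dv_smul _ ((hu.Wf.mul hu.Wf).mul (hu.Qf.dv _)) hp,
    dv_mul (hu.Wf.mul hu.Wf) (hu.Qf.dv _) hp, dv_mul hu.Wf hu.Wf hp, neg_one_mul, abs_neg]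
  refine (abs_add_le _ _).trans ?_
  have t1 := abs_mul_le' (abs_mul_le' hWa hWa) (hQlk l k)
  have t2 := abs_mul_le' (hQk k) ((abs_add_le _ _).trans
    (add_le_add (abs_mul_le' hWa (hWk l)) (abs_mul_le' hWa (hWk l))))
  simp only [Pi.mul_apply]
  nlinarith

lemma Bd_aF (hΩ : IsOpen Ω) (hu : Sm Ω u) (hp : p ∈ Ω) {H T : ℝ}
    (hg : ∀ i, |gr u p i| ≤ 1) (hH : ∀ i j, |dv (ev i) (dv (ev j) u) p| ≤ H)
    (hT : ∀ i j k, |dv (ev i) (dv (ev j) (dv (ev k) u)) p| ≤ T) (i j : Fin n) :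
    (∀ k, |dv (ev k) (aF u i j) p| ≤ (2 + 2 * n) * H) ∧
    ∀ l k, |dv (ev l) (dv (ev k) (aF u i j)) p| ≤
      (2 + 2 * n) * T + (2 + 10 * n + 8 * n ^ 2) * H ^ 2 := by
  have hU : ∀ i, Bd (dv (ev i) u) p 1 H T := fun i => ⟨hg i, fun k => hH k i, fun l k => hT l k i⟩
  have hB := ((hU i).mul hΩ (hu.dv _) (hu.dv _) hp (hU j)).mul hΩ
    ((hu.dv _).mul (hu.dv _)) hu.Wf hp (Bd_Wf hΩ hu hp hg hH hT)
  set M := dv (ev i) u * dv (ev j) u * Wf u with hM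
  have hMs : Sm Ω M := ((hu.dv _).mul (hu.dv _)).mul hu.Wf
  have e1 : ∀ k, ∀ q ∈ Ω, dv (ev k) (aF u i j) q = ((-1:ℝ) • dv (ev k) M) q := by
    intro k q hq
    unfold aF
    rw [dv_sub (Sm.const _) hMs hq, dv_const]; simp
  constructor
  · intro k
    rw [e1 k p hp]
    have := hB.2.1 k
    simp only [Pi.smul_apply, smul_eq_mul, neg_one_mul, abs_neg]
    refine this.trans (le_of_eq (by ring))
  · intro l k
    rw [dv_congr hΩ (e1 k) hp, dv_smul _ (hMs.dv _) hp, neg_one_mul, abs_neg]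
    refine (hB.2.2 l k).trans (le_of_eq (by ring))

/-- Squared norm of the Hessian. -/
noncomputable def hf (u : ℝ × EE n → ℝ) : ℝ × EE n → ℝ :=
  ∑ k, ∑ l, (dv (ev k) (dv (ev l) u)) ^ 2

lemma hf_apply (u : ℝ × EE n → ℝ) (p) : hf u p = ∑ k, ∑ l, hs u p k l ^ 2 := by
  simp [hf, hs]

lemma Sm.hf (hu : Sm Ω u) : Sm Ω (hf u) :=
  Sm.sum _ fun _ _ => Sm.sum _ fun _ _ => ((hu.dv _).dv _).pow 2

/-- Constant used below. -/
noncomputable def Cn (n : ℕ) : ℝ := n ^ 2 * (2 * n ^ 2 * (3 * (2 + 10 * n + 8 * n ^ 2)))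

/-- Constant in the evolution of the Hessian. -/
noncomputable def C2 (n : ℕ) : ℝ := Cn n ^ 2 + Cn n

lemma sq_le_sum_sq {ι : Type*} [Fintype ι] (f : ι → ℝ) (i : ι) : f i ^ 2 ≤ ∑ j, f j ^ 2 :=
  Finset.single_le_sum (f := fun j => f j ^ 2) (fun j _ => sq_nonneg (f j)) (Finset.mem_univ i)

lemma PP_hf_le (hΩ : IsOpen Ω) (hu : Sm Ω u) (hpde : ∀ p ∈ Ω, PP (aM (gr u p)) u p = 0)
    (hp : p ∈ Ω) (hq : ∑ k, gr u p k ^ 2 ≤ 1) :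
    PP (aM (gr u p)) (hf u) p ≤ C2 n * hf u p ^ 2 - (3 / 2) * ∑ k, ∑ l,
      AA (aM (gr u p)) (dv (ev k) (dv (ev l) u)) (dv (ev k) (dv (ev l) u)) p := by
  set a := aM (gr u p)
  set TT := ∑ k, ∑ l, ∑ i, dv (ev i) (dv (ev k) (dv (ev l) u)) p ^ 2 with hTT
  set T := Real.sqrt TT
  set H := Real.sqrt (hf u p)
  have hTT0 : 0 ≤ TT := by positivity
  have hh0 : 0 ≤ hf u p := by rw [hf_apply]; positivity
  have hT2 : T ^ 2 = TT := Real.sq_sqrt hTT0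
  have hH2 : H ^ 2 = hf u p := Real.sq_sqrt hh0
  have hT0 : 0 ≤ T := Real.sqrt_nonneg _
  have hH0 : 0 ≤ H := Real.sqrt_nonneg _
  have hg : ∀ i, |gr u p i| ≤ 1 := by
    intro i
    rw [← sq_le_one_iff_abs_le_one]
    exact (sq_le_sum_sq (gr u p) i).trans hq
  have hH : ∀ i j, |dv (ev i) (dv (ev j) u) p| ≤ H := by
    intro i j
    refine Real.abs_le_sqrt ?_
    rw [hf_apply]
    refine (sq_le_sum_sq (fun l => hs u p i l) j).trans ?_
    exact Finset.single_le_sum (f := fun k => ∑ l, hs u p k l ^ 2)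
      (fun k _ => by positivity) (Finset.mem_univ i)
  have hT : ∀ i k l, |dv (ev i) (dv (ev k) (dv (ev l) u)) p| ≤ T := by
    intro i k l
    refine Real.abs_le_sqrt ?_
    refine (sq_le_sum_sq (fun i => dv (ev i) (dv (ev k) (dv (ev l) u)) p) i).trans ?_
    refine (Finset.single_le_sum (f := fun l => ∑ i, dv (ev i) (dv (ev k) (dv (ev l) u)) p ^ 2)
      (fun k _ => by positivity) (Finset.mem_univ l)).trans ?_
    exact Finset.single_le_sum (f := fun k => ∑ l, ∑ i, dv (ev i) (dv (ev k) (dv (ev l) u)) p ^ 2)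
      (fun k _ => by positivity) (Finset.mem_univ k)
  have hB := Bd_aF hΩ hu hp hg hH hT
  set c : ℝ := 2 + 10 * n + 8 * n ^ 2 with hc
  have hn0 : (0:ℝ) ≤ n := Nat.cast_nonneg n
  have hB1 : ∀ i j k, |dv (ev k) (aF u i j) p| ≤ c * H := by
    intro i j k
    refine ((hB i j).1 k).trans (mul_le_mul_of_nonneg_right ?_ hH0)
    rw [hc]; nlinarith [sq_nonneg (n:ℝ)]
  have hB2 : ∀ i j l k, |dv (ev l) (dv (ev k) (aF u i j)) p| ≤ c * T + c * H ^ 2 := by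
    intro i j l k
    refine ((hB i j).2 l k).trans ?_
    have : (2 + 2 * (n:ℝ)) * T ≤ c * T := by
      refine mul_le_mul_of_nonneg_right ?_ hT0
      rw [hc]; nlinarith [sq_nonneg (n:ℝ)]
    linarith
  -- the evolution of each second derivative
  have hPk : ∀ k : Fin n, ∀ q ∈ Ω, PP (aM (gr u q)) (dv (ev k) u) q
      = (∑ i, ∑ j, dv (ev i) (dv (ev j) u) * dv (ev k) (aF u i j)) q := by
    intro k q hq
    rw [PP_dv (R := fun _ => 0) hΩ hu hu hpde (Sm.const 0) hq, dv_const, zero_add]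
    simp [hs]
  have hsm : ∀ k i j, Sm Ω (dv (ev i) (dv (ev j) u) * dv (ev k) (aF u i j)) :=
    fun k i j => ((hu.dv _).dv _).mul ((hu.aF i j).dv _)
  have hPkl : ∀ k l : Fin n, |PP a (dv (ev k) (dv (ev l) u)) p|
      ≤ n * (n * (3 * c * (H * T) + c * H ^ 3)) := by
    intro k l
    rw [PP_dv hΩ hu (hu.dv _) (hPk l) (Sm.sum _ fun i _ => Sm.sum _ fun j _ => hsm l i j) hp,
      dv_sum _ (fun i _ => Sm.sum _ fun j _ => hsm l i j) hp, ← Finset.sum_add_distrib]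
    refine abs_sum_le' _ fun i => ?_
    rw [dv_sum _ (fun j _ => hsm l i j) hp, ← Finset.sum_add_distrib]
    refine abs_sum_le' _ fun j => ?_
    rw [dv_mul ((hu.dv _).dv _) ((hu.aF i j).dv _) hp]
    have t1 := abs_mul_le' (hH i j) (hB2 i j k l)
    have t2 := abs_mul_le' (hB1 i j l) (hT k i j)
    have t3 := abs_mul_le' (hT i j l) (hB1 i j k)
    refine (abs_add_le _ _).trans ((add_le_add ((abs_add_le _ _).trans (add_le_add t1 t2)) t3).trans
      (le_of_eq (by ring)))
  have hmain : PP a (hf u) p = ∑ k, ∑ l, (2 * hs u p k l * PP a (dv (ev k) (dv (ev l) u)) p)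
      - 2 * ∑ k, ∑ l, AA a (dv (ev k) (dv (ev l) u)) (dv (ev k) (dv (ev l) u)) p := by
    unfold hf
    rw [PP_sum hΩ _ (fun k => Sm.sum _ fun l _ => ((hu.dv _).dv _).pow 2) hp, Finset.mul_sum,
      ← Finset.sum_sub_distrib]
    refine Finset.sum_congr rfl fun k _ => ?_
    rw [PP_sum hΩ _ (fun l => ((hu.dv _).dv _).pow 2) hp, Finset.mul_sum,
      ← Finset.sum_sub_distrib]
    refine Finset.sum_congr rfl fun l _ => ?_
    rw [PP_sq hΩ (aM_symm _) ((hu.dv _).dv _) hp]; rfl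
  have hA : TT ≤ 2 * ∑ k, ∑ l, AA a (dv (ev k) (dv (ev l) u)) (dv (ev k) (dv (ev l) u)) p := by
    rw [hTT, Finset.mul_sum]
    refine Finset.sum_le_sum fun k _ => ?_
    rw [Finset.mul_sum]
    refine Finset.sum_le_sum fun l _ => ?_
    have h1 := aM_lower (gr u p) (fun i => dv (ev i) (dv (ev k) (dv (ev l) u)) p)
    rw [← AA_eq_bil, ← Wf_apply] at h1
    set X := ∑ i, dv (ev i) (dv (ev k) (dv (ev l) u)) p ^ 2
    have hX : 0 ≤ X := by positivity
    have hWQ : Wf u p * Qf u p = 1 := inv_mul_cancel₀ (Qf_pos u p).ne'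
    have hQ2 : Qf u p ≤ 2 := by rw [Qf_apply]; linarith
    have hW := Wf_pos u p
    have : 1 ≤ 2 * Wf u p := by nlinarith
    nlinarith
  have hsum : |∑ k, ∑ l, (2 * hs u p k l * PP a (dv (ev k) (dv (ev l) u)) p)|
      ≤ n * (n * (2 * H * (n * (n * (3 * c * (H * T) + c * H ^ 3))))) := by
    refine abs_sum_le' _ fun k => abs_sum_le' _ fun l => ?_
    refine abs_mul_le' ?_ (hPkl k l)
    rw [abs_mul, abs_two]
    have := hH k l
    simp only [hs]; linarith
  have hsum' := (le_abs_self _).trans hsum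
  set S := ∑ k, ∑ l, AA a (dv (ev k) (dv (ev l) u)) (dv (ev k) (dv (ev l) u)) p
  rw [hmain]
  have e : n * (n * (2 * H * (n * (n * (3 * c * (H * T) + c * H ^ 3)))))
      = Cn n * (H ^ 2 * T) + Cn n / 3 * (H ^ 2) ^ 2 := by
    unfold Cn; rw [← hc]; ring
  rw [e] at hsum'
  have hCn : 0 ≤ Cn n := by unfold Cn; positivity
  have h5 : Cn n * (H ^ 2 * T) ≤ 1 / 4 * T ^ 2 + Cn n ^ 2 * (H ^ 2) ^ 2 := by
    nlinarith [sq_nonneg (1 / 2 * T - Cn n * H ^ 2)]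
  have h6 : Cn n / 3 * (H ^ 2) ^ 2 ≤ Cn n * (H ^ 2) ^ 2 := by
    refine mul_le_mul_of_nonneg_right (by linarith) (by positivity)
  rw [hT2] at h5
  rw [hH2] at h5 h6 hsum'
  unfold C2
  linarith

end hessian

section setup
variable {n : ℕ} {Ω : Set (ℝ × EE n)} {u F G : ℝ × EE n → ℝ} {p : ℝ × EE n}
  {a : Fin n → Fin n → ℝ}

lemma Sm.congr (hΩ : IsOpen Ω) (hF : Sm Ω F) (h : ∀ p ∈ Ω, G p = F p) : Sm Ω G := fun p hp =>
  (hF p hp).congr_of_eventuallyEq (Filter.eventually_of_mem (hΩ.mem_nhds hp) h)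

lemma PP_congr (hΩ : IsOpen Ω) (h : ∀ p ∈ Ω, G p = F p) (hp : p ∈ Ω) : PP a G p = PP a F p := by
  unfold PP
  rw [dv_congr hΩ h hp]
  congr 1
  refine Finset.sum_congr rfl fun i _ => Finset.sum_congr rfl fun j _ => ?_
  rw [dv_congr hΩ (fun q hq => dv_congr hΩ h hq) hp]

lemma max_principle' (hΩ : IsOpen Ω) {G G' : ℝ × EE n → ℝ} (hG : Sm Ω G)
    (heq : ∀ p ∈ Ω, G' p = G p)
    (P : ℝ × EE n → Fin n → ℝ) {a b θ : ℝ} {x0 : EE n} {r : ℝ}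
    (hGc : ContinuousOn G' (Icc a b ×ˢ closedBall x0 r))
    (hsub : Ioc a b ×ˢ ball x0 r ⊆ Ω)
    (hinit : ∀ x ∈ closedBall x0 r, G' (a, x) < θ)
    (hlat : ∀ t ∈ Icc a b, ∀ x ∈ sphere x0 r, G' (t, x) < θ)
    (hno : ∀ p ∈ Ioc a b ×ˢ ball x0 r, G p = θ → (∀ i, dv (ev i) G p = 0) →
      PP (aM (P p)) G p < 0) :
    ∀ t ∈ Icc a b, ∀ x ∈ closedBall x0 r, G' (t, x) < θ := by
  refine max_principle hΩ (hG.congr hΩ heq) P hGc hsub hinit hlat ?_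
  intro p hp h1 h2
  have hpΩ := hsub hp
  rw [PP_congr hΩ heq hpΩ]
  refine hno p hp ((heq p hpΩ).symm.trans h1) fun i => ?_
  rw [← h2 i]
  exact (dv_congr hΩ heq hpΩ).symm

/-- Coordinate function. -/
noncomputable def Xc (z : EE n) (k : Fin n) : ℝ × EE n → ℝ := fun p => p.2 k - z k

/-- Squared distance function. -/
noncomputable def rad (z : EE n) : ℝ × EE n → ℝ := ∑ k, (Xc z k) ^ 2

/-- Time function. -/
def tm (n : ℕ) (c : ℝ) : ℝ × EE n → ℝ := fun p => p.1 - c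

lemma Sm.Xc (z : EE n) (k : Fin n) : Sm Ω (Xc z k) := by
  intro p _
  unfold _root_.Xc
  fun_prop

lemma Sm.rad (z : EE n) : Sm Ω (rad z) := Sm.sum _ fun k _ => (Sm.Xc z k).pow 2

lemma Sm.tm (c : ℝ) : Sm Ω (tm n c) := by
  intro p _
  unfold _root_.tm
  fun_prop

lemma dv_Xc (z : EE n) (k : Fin n) (v : ℝ × EE n) : dv v (Xc z k) = fun _ => v.2 k := by
  ext p
  have h : HasFDerivAt (Xc z k)
      ((EuclideanSpace.proj (𝕜 := ℝ) k : EE n →L[ℝ] ℝ).comp (ContinuousLinearMap.snd ℝ ℝ (EE n)))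
      p := by
    have := ((EuclideanSpace.proj (𝕜 := ℝ) k : EE n →L[ℝ] ℝ).comp
      (ContinuousLinearMap.snd ℝ ℝ (EE n))).hasFDerivAt (x := p)
    exact this.sub_const (z k)
  simp [dv, h.fderiv]

lemma dv_tm (c : ℝ) (v : ℝ × EE n) : dv v (tm n c) = fun _ => v.1 := by
  ext p
  have h : HasFDerivAt (tm n c) (ContinuousLinearMap.fst ℝ ℝ (EE n)) p := by
    have := (ContinuousLinearMap.fst ℝ ℝ (EE n)).hasFDerivAt (x := p)
    exact this.sub_const c
  simp [dv, h.fderiv]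

lemma PP_tm (c : ℝ) : PP a (tm n c) p = 1 := by
  simp [PP, dv_tm, dv_const_fun]

lemma PP_Xc (z : EE n) (k : Fin n) : PP a (Xc z k) p = 0 := by
  simp [PP, dv_Xc, dv_const_fun]

lemma AA_Xc (z : EE n) (k : Fin n) : AA a (Xc z k) (Xc z k) p = a k k := by
  simp [AA, dv_Xc, ev]

lemma rad_apply (z : EE n) (p) : rad z p = dist p.2 z ^ 2 := by
  rw [EuclideanSpace.dist_eq, Real.sq_sqrt (by positivity)]
  simp [rad, Xc, Real.dist_eq, sq_abs]

lemma PP_rad (hΩ : IsOpen Ω) (ha : ∀ i j, a i j = a j i) (hp : p ∈ Ω) (z : EE n) :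
    PP a (rad z) p = -2 * ∑ k, a k k := by
  unfold rad
  rw [PP_sum hΩ _ (fun k => (Sm.Xc z k).pow 2) hp, Finset.mul_sum]
  refine Finset.sum_congr rfl fun k _ => ?_
  rw [PP_sq hΩ ha (Sm.Xc z k) hp, PP_Xc, AA_Xc]; ring

lemma dv_rad (hp : p ∈ Ω) (z : EE n) (i : Fin n) : dv (ev i) (rad z) p = 2 * Xc z i p := by
  unfold rad
  rw [dv_sum (Ω := Ω) _ (fun k _ => (Sm.Xc z k).pow 2) hp]
  simp only [dv_sq (Ω := Ω) (Sm.Xc z _) hp, dv_Xc]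
  simp [ev]

end setup

section flow
variable {n : ℕ}

/-- Space-time version. -/
def spt (f : ℝ → EE n → ℝ) : ℝ × EE n → ℝ := fun p => f p.1 p.2

lemma pd_eq_within {I : Set ℝ} {U : Set (EE n)} (hU : IsOpen U) {f : ℝ → EE n → ℝ}
    (hf : DifferentiableOn ℝ (spt f) (I ×ˢ U)) {t : ℝ} (ht : t ∈ I) {x : EE n} (hx : x ∈ U)
    (i : Fin n) : pd (f t) x i = fderivWithin ℝ (spt f) (I ×ˢ U) (t, x) (ev i) := by
  have h1 := (hf (t, x) ⟨ht, hx⟩).hasFDerivWithinAt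
  have h2 : HasFDerivWithinAt (fun y : EE n => (t, y)) (ContinuousLinearMap.inr ℝ ℝ (EE n)) U x :=
    (hasFDerivAt_prodMk_right t x).hasFDerivWithinAt
  have h3 := (h1.comp x h2 (fun y hy => ⟨ht, hy⟩)).hasFDerivAt (hU.mem_nhds hx)
  have h4 : fderiv ℝ (f t) x = _ := h3.fderiv
  unfold pd
  rw [h4]; rfl

variable {t₁ t₂ : ℝ} {U : Set (EE n)} {f : ℝ → EE n → ℝ}

lemma gmcf_sm (hU : IsOpen U) (hf : IsGMCF (Ico t₁ t₂) U f) : Sm (Ioo t₁ t₂ ×ˢ U) (spt f) := by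
  intro p hp
  exact (hf.1.mono (prod_mono Ioo_subset_Ico_self le_rfl)).contDiffAt
    ((isOpen_Ioo.prod hU).mem_nhds hp)

lemma gmcf_diff (hf : IsGMCF (Ico t₁ t₂) U f) : DifferentiableOn ℝ (spt f) (Ico t₁ t₂ ×ˢ U) :=
  hf.1.differentiableOn (by simp)

lemma pd_eq (hU : IsOpen U) (hf : IsGMCF (Ico t₁ t₂) U f) {p : ℝ × EE n}
    (hp : p ∈ Ioo t₁ t₂ ×ˢ U) (i : Fin n) : pd (f p.1) p.2 i = gr (spt f) p i := by
  have h : Ico t₁ t₂ ×ˢ U ∈ nhds p :=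
    Filter.mem_of_superset ((isOpen_Ioo.prod hU).mem_nhds hp)
      (prod_mono Ioo_subset_Ico_self le_rfl)
  rw [pd_eq_within hU (gmcf_diff hf) (Ioo_subset_Ico_self hp.1) hp.2]
  change fderivWithin ℝ (spt f) (Ico t₁ t₂ ×ˢ U) p (ev i) = _
  rw [fderivWithin_of_mem_nhds h]; rfl

lemma slice_deriv {g : ℝ × EE n → ℝ} {p : ℝ × EE n} (hg : DifferentiableAt ℝ g p) (i : Fin n) :
    fderiv ℝ (fun y => g (p.1, y)) p.2 (EuclideanSpace.single i 1) = dv (ev i) g p := by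
  have h2 : HasFDerivAt (fun y : EE n => (p.1, y)) (ContinuousLinearMap.inr ℝ ℝ (EE n)) p.2 :=
    hasFDerivAt_prodMk_right p.1 p.2
  have h3 := HasFDerivAt.comp p.2 (g := g) (f := fun y : EE n => (p.1, y)) hg.hasFDerivAt h2
  have h4 : fderiv ℝ (fun y => g (p.1, y)) p.2 = _ := h3.fderiv
  rw [h4]; rfl

lemma pd2_eq (hU : IsOpen U) (hf : IsGMCF (Ico t₁ t₂) U f) {p : ℝ × EE n}
    (hp : p ∈ Ioo t₁ t₂ ×ˢ U) (i j : Fin n) : pd2 (f p.1) p.2 i j = hs (spt f) p i j := by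
  have hs := (gmcf_sm hU hf).dv (ev j)
  unfold pd2 _root_.hs
  rw [← slice_deriv (hs.diff hp) i]
  congr 1
  refine Filter.EventuallyEq.fderiv_eq ?_
  filter_upwards [hU.mem_nhds hp.2] with y hy
  exact pd_eq hU hf (p := (p.1, y)) ⟨hp.1, hy⟩ j

lemma dt_eq (hU : IsOpen U) (hf : IsGMCF (Ico t₁ t₂) U f) {p : ℝ × EE n}
    (hp : p ∈ Ioo t₁ t₂ ×ˢ U) : deriv (fun s => f s p.2) p.1 = dv (1, 0) (spt f) p := by
  have hd := ((gmcf_sm hU hf).diff hp).hasFDerivAt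
  have h2 : HasDerivAt (fun s : ℝ => (s, p.2)) (1, 0) p.1 :=
    (hasDerivAt_id p.1).prodMk (hasDerivAt_const p.1 p.2)
  exact (hd.comp_hasDerivAt p.1 h2).deriv

lemma gns_eq (hU : IsOpen U) (hf : IsGMCF (Ico t₁ t₂) U f) {p : ℝ × EE n}
    (hp : p ∈ Ioo t₁ t₂ ×ˢ U) : gradNormSq (f p.1) p.2 = ∑ k, gr (spt f) p k ^ 2 := by
  unfold gradNormSq
  exact Finset.sum_congr rfl fun k _ => by rw [pd_eq hU hf hp]

lemma gmcf_pde (hU : IsOpen U) (hf : IsGMCF (Ico t₁ t₂) U f) {p : ℝ × EE n}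
    (hp : p ∈ Ioo t₁ t₂ ×ˢ U) : PP (aM (gr (spt f) p)) (spt f) p = 0 := by
  have h := hf.2 p.1 (Ioo_subset_Ico_self hp.1) p.2 hp.2
  rw [dt_eq hU hf hp] at h
  unfold PP
  rw [h, sub_eq_zero]
  unfold mcfRHS
  refine Finset.sum_congr rfl fun i _ => Finset.sum_congr rfl fun j _ => ?_
  rw [pd_eq hU hf hp, pd_eq hU hf hp, gns_eq hU hf hp, pd2_eq hU hf hp]
  rfl

lemma gns_cont (hU : IsOpen U) (hf : IsGMCF (Ico t₁ t₂) U f) :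
    ContinuousOn (fun p : ℝ × EE n => gradNormSq (f p.1) p.2) (Ico t₁ t₂ ×ˢ U) := by
  have hud : UniqueDiffOn ℝ (Ico t₁ t₂ ×ˢ U) := (uniqueDiffOn_Ico t₁ t₂).prod hU.uniqueDiffOn
  have hc := hf.1.continuousOn_fderivWithin hud (by simp)
  have : ContinuousOn (fun p : ℝ × EE n =>
      ∑ i, (fderivWithin ℝ (spt f) (Ico t₁ t₂ ×ˢ U) p (ev i)) ^ 2) (Ico t₁ t₂ ×ˢ U) :=
    continuousOn_finsetSum _ fun i _ => (hc.clm_apply continuousOn_const).pow 2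
  refine this.congr ?_
  intro p hp
  unfold gradNormSq
  exact Finset.sum_congr rfl fun k _ => by
    rw [pd_eq_within hU (gmcf_diff hf) hp.1 hp.2]

end flow

section steps
variable {n : ℕ} {t₁ t₂ τ ρ : ℝ} {z₀ : EE n} {f : ℝ → EE n → ℝ}

lemma rad_nonneg (z : EE n) (p) : 0 ≤ rad z p := by rw [rad_apply]; positivity

lemma rad_cont (z : EE n) : Continuous (rad z) := by
  have : rad z = fun p => dist p.2 z ^ 2 := by ext p; exact rad_apply z p
  rw [this]; fun_prop

lemma tm_cont (c : ℝ) : Continuous (tm n c) := by unfold tm; fun_prop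

lemma sub_dom {x0 : EE n} {a r R : ℝ} (ha : t₁ ≤ a) (hτ2 : t₁ + τ < t₂)
    (hb : closedBall x0 r ⊆ ball z₀ R) :
    Icc a (t₁ + τ) ×ˢ closedBall x0 r ⊆ Ico t₁ t₂ ×ˢ ball z₀ R :=
  prod_mono (fun _ ht => ⟨ha.trans ht.1, ht.2.trans_lt hτ2⟩) hb

lemma sub_dom' {x0 : EE n} {a r R : ℝ} (ha : t₁ ≤ a) (hτ2 : t₁ + τ < t₂)
    (hb : closedBall x0 r ⊆ ball z₀ R) :
    Ioc a (t₁ + τ) ×ˢ ball x0 r ⊆ Ioo t₁ t₂ ×ˢ ball z₀ R :=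
  prod_mono (fun _ ht => ⟨ha.trans_lt ht.1, ht.2.trans_lt hτ2⟩)
    (ball_subset_closedBall.trans hb)

lemma cb_sub {x0 : EE n} {r s R : ℝ} (hx : x0 ∈ ball z₀ s) (h : r + s ≤ R) :
    closedBall x0 r ⊆ ball z₀ R := by
  intro y hy
  rw [mem_ball] at *
  rw [mem_closedBall] at hy
  linarith [dist_triangle y x0 z₀]

/-- Step A: one-sided height estimate. -/
lemma height_aux (hρ : 0 < ρ) (hτ : 0 < τ) (hτ2 : t₁ + τ < t₂)
    (hf : IsGMCF (Ico t₁ t₂) (ball z₀ (4 * ρ)) f)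
    (hb : ∀ t ∈ Ico t₁ t₂, ∀ x ∈ ball z₀ (4 * ρ), |f t x| < 4 * ρ) {ε : ℝ} (hε : 0 < ε)
    (h0 : ∀ x ∈ ball z₀ (4 * ρ), |f t₁ x| ≤ ε) (σ : ℝ) (hσ : |σ| = 1) :
    ∀ t ∈ Icc t₁ (t₁ + τ), ∀ x ∈ ball z₀ (3 * ρ),
      σ * f t x ≤ 2 * ε + 4 / ρ * (2 * n + 1) * τ := by
  intro t ht x0 hx0
  have hU : IsOpen (ball z₀ (4 * ρ)) := isOpen_ball
  have hΩ : IsOpen (Ioo t₁ t₂ ×ˢ ball z₀ (4 * ρ)) := isOpen_Ioo.prod hU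
  have hu := gmcf_sm hU hf
  have hcb : closedBall x0 ρ ⊆ ball z₀ (4 * ρ) := cb_sub hx0 (by linarith)
  have hσf : ∀ y, σ * y ≤ |y| := by
    intro y
    calc σ * y ≤ |σ * y| := le_abs_self _
      _ = |y| := by rw [abs_mul, hσ, one_mul]
  have hB : Sm (Ioo t₁ t₂ ×ˢ ball z₀ (4 * ρ)) (rad x0 + (2 * n + 1 : ℝ) • tm n t₁) :=
    (Sm.rad x0).add ((Sm.tm t₁).smul _)
  have key := max_principle hΩ (G := σ • spt f - (4 / ρ) • (rad x0 + (2 * n + 1 : ℝ) • tm n t₁))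
    ((hu.smul σ).sub (hB.smul _)) (gr (spt f)) (a := t₁) (b := t₁ + τ) (θ := 2 * ε) (x0 := x0)
    (r := ρ) ?_ (sub_dom' le_rfl hτ2 hcb) ?_ ?_ ?_
  · have := key t ht x0 (mem_closedBall_self hρ.le)
    simp only [Pi.sub_apply, Pi.smul_apply, Pi.add_apply, smul_eq_mul, spt, rad_apply, tm,
      dist_self] at this
    have h2 : 4 / ρ * (2 * n + 1) * (t - t₁) ≤ 4 / ρ * (2 * n + 1) * τ := by
      have : t - t₁ ≤ τ := by linarith [ht.2]
      gcongr
    have e : 4 / ρ * (0 ^ 2 + (2 * n + 1) * (t - t₁)) = 4 / ρ * (2 * n + 1) * (t - t₁) := by ring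
    rw [e] at this
    linarith
  · have hc : ContinuousOn (spt f) (Icc t₁ (t₁ + τ) ×ˢ closedBall x0 ρ) :=
      hf.1.continuousOn.mono (sub_dom le_rfl hτ2 hcb)
    exact (hc.const_smul σ).sub
      ((((rad_cont x0).add ((tm_cont t₁).const_smul _)).const_smul _).continuousOn)
  · intro x hx
    simp only [Pi.sub_apply, Pi.smul_apply, Pi.add_apply, smul_eq_mul, spt, tm, sub_self,
      mul_zero, add_zero]
    have h1 := (hσf (f t₁ x)).trans (h0 x (hcb hx))
    have h2 : 0 ≤ 4 / ρ * rad x0 (t₁, x) := mul_nonneg (by positivity) (rad_nonneg _ _)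
    linarith
  · intro s hs x hx
    have hx' : x ∈ closedBall x0 ρ := sphere_subset_closedBall hx
    simp only [Pi.sub_apply, Pi.smul_apply, Pi.add_apply, smul_eq_mul, spt, rad_apply, tm]
    rw [mem_sphere] at hx
    rw [hx]
    have h1 := (hσf (f s x)).trans_lt (hb s ⟨hs.1, hs.2.trans_lt hτ2⟩ x (hcb hx'))
    have h2 : 4 / ρ * (ρ ^ 2 + (2 * n + 1) * (s - t₁))
        = 4 * ρ + 4 / ρ * ((2 * n + 1) * (s - t₁)) := by field_simp
    have h3 : 0 ≤ 4 / ρ * ((2 * n + 1) * (s - t₁)) := by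
      have : 0 ≤ s - t₁ := by linarith [hs.1]
      positivity
    rw [h2]; linarith
  · intro p hp _ _
    have hp' := sub_dom' le_rfl hτ2 hcb hp
    rw [PP_sub hΩ (hu.smul σ) (hB.smul _) hp', PP_smul hΩ _ hu hp', PP_smul hΩ _ hB hp',
      PP_add hΩ (Sm.rad x0) ((Sm.tm t₁).smul _) hp', PP_smul hΩ _ (Sm.tm t₁) hp', PP_tm,
      PP_rad hΩ (aM_symm _) hp', gmcf_pde hU hf hp']
    have h1 := aM_trace (gr (spt f) p)
    have h2 : 0 < 4 / ρ * (-2 * ∑ k, aM (gr (spt f) p) k k + (2 * n + 1) * 1) :=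
      mul_pos (by positivity) (by linarith)
    linarith

lemma height (hρ : 0 < ρ) (hτ : 0 < τ) (hτ2 : t₁ + τ < t₂)
    (hf : IsGMCF (Ico t₁ t₂) (ball z₀ (4 * ρ)) f)
    (hb : ∀ t ∈ Ico t₁ t₂, ∀ x ∈ ball z₀ (4 * ρ), |f t x| < 4 * ρ) {ε : ℝ} (hε : 0 < ε)
    (h0 : ∀ x ∈ ball z₀ (4 * ρ), |f t₁ x| ≤ ε) :
    ∀ t ∈ Icc t₁ (t₁ + τ), ∀ x ∈ ball z₀ (3 * ρ),
      |f t x| ≤ 2 * ε + 4 / ρ * (2 * n + 1) * τ := by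
  intro t ht x hx
  have h1 := height_aux hρ hτ hτ2 hf hb hε h0 1 (by simp) t ht x hx
  have h2 := height_aux hρ hτ hτ2 hf hb hε h0 (-1) (by simp) t ht x hx
  rw [abs_le]; constructor <;> linarith

/-- Step B: gradient bound. -/
lemma grad_bound (hρ : 0 < ρ) (hτ2 : t₁ + τ < t₂) (hτρ : (2 * n + 1) * τ ≤ ρ ^ 2)
    (hf : IsGMCF (Ico t₁ t₂) (ball z₀ (4 * ρ)) f) {L : ℝ} (hL : 0 ≤ L)
    (h0 : ∀ x ∈ ball z₀ (4 * ρ), gradNorm (f t₁) x ≤ L) :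
    ∀ t ∈ Icc t₁ (t₁ + τ), ∀ x ∈ ball z₀ (5 / 2 * ρ),
      1 + gradNormSq (f t) x ≤ 729 * (2 + L ^ 2) := by
  have hU : IsOpen (ball z₀ (4 * ρ)) := isOpen_ball
  have hΩ : IsOpen (Ioo t₁ t₂ ×ˢ ball z₀ (4 * ρ)) := isOpen_Ioo.prod hU
  have hu := gmcf_sm hU hf
  have hcb : closedBall z₀ (3 * ρ) ⊆ ball z₀ (4 * ρ) := closedBall_subset_ball (by linarith)
  set η : ℝ × EE n → ℝ := (fun _ => 9 * ρ ^ 2) - (rad z₀ + (2 * n + 1 : ℝ) • tm n t₁) with hη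
  have hηa : ∀ p, η p = 9 * ρ ^ 2 - (rad z₀ p + (2 * n + 1) * (p.1 - t₁)) := fun p => rfl
  have hB : Sm (Ioo t₁ t₂ ×ˢ ball z₀ (4 * ρ)) (rad z₀ + (2 * n + 1 : ℝ) • tm n t₁) :=
    (Sm.rad z₀).add ((Sm.tm t₁).smul _)
  have hηs : Sm (Ioo t₁ t₂ ×ˢ ball z₀ (4 * ρ)) η := (Sm.const _).sub hB
  have hηc : Continuous η :=
    continuous_const.sub ((rad_cont z₀).add ((tm_cont t₁).const_smul _))
  have hgn0 : ∀ t x, 0 ≤ gradNormSq (f t) x := fun t x => by unfold gradNormSq; positivity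
  set θ := (2 + L ^ 2) * (9 * ρ ^ 2) ^ 3 with hθ
  have hθ0 : 0 < θ := by positivity
  have key := max_principle' hΩ (G := Qf (spt f) * (η * (η * η)))
    (G' := fun p => (1 + gradNormSq (f p.1) p.2) * (η p * (η p * η p)))
    (hu.Qf.mul (hηs.mul (hηs.mul hηs))) ?_ (gr (spt f)) (a := t₁) (b := t₁ + τ) (θ := θ)
    (x0 := z₀) (r := 3 * ρ) ?_ (sub_dom' le_rfl hτ2 hcb) ?_ ?_ ?_
  · intro t ht x hx
    rw [mem_ball] at hx
    have hk := key t ht x (by rw [mem_closedBall]; linarith)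
    simp only at hk
    have hη1 : ρ ^ 2 ≤ η (t, x) := by
      rw [hηa, rad_apply]
      have h1 : dist x z₀ ^ 2 ≤ (5 / 2 * ρ) ^ 2 := by
        have := dist_nonneg (x := x) (y := z₀)
        gcongr
      have h2 : (2 * n + 1) * (t - t₁) ≤ ρ ^ 2 := by
        refine le_trans ?_ hτρ
        have : t - t₁ ≤ τ := by linarith [ht.2]
        gcongr
      simp only
      nlinarith [sq_nonneg ρ]
    have hη3 : (ρ ^ 2) ^ 3 ≤ η (t, x) * (η (t, x) * η (t, x)) := by
      have : (ρ ^ 2) ^ 3 ≤ η (t, x) ^ 3 := by gcongr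
      linarith [this, show η (t, x) ^ 3 = η (t, x) * (η (t, x) * η (t, x)) by ring]
    have h4 : (1 + gradNormSq (f t) x) * (ρ ^ 2) ^ 3 ≤ 729 * (2 + L ^ 2) * (ρ ^ 2) ^ 3 := by
      have h5 : (1 + gradNormSq (f t) x) * (ρ ^ 2) ^ 3 ≤
          (1 + gradNormSq (f t) x) * (η (t, x) * (η (t, x) * η (t, x))) :=
        mul_le_mul_of_nonneg_left hη3 (by linarith [hgn0 t x])
      have h6 : θ = 729 * (2 + L ^ 2) * (ρ ^ 2) ^ 3 := by rw [hθ]; ring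
      linarith
    exact le_of_mul_le_mul_right h4 (by positivity)
  · intro p hp
    simp only [Pi.mul_apply, Qf_apply, gns_eq hU hf hp]
  · have hc := (gns_cont hU hf).mono (sub_dom le_rfl hτ2 hcb)
    exact (continuousOn_const.add hc).mul ((hηc.mul (hηc.mul hηc)).continuousOn)
  · intro x hx
    have hη0 : 0 ≤ η (t₁, x) := by
      rw [hηa, rad_apply]
      have h1 : dist x z₀ ^ 2 ≤ (3 * ρ) ^ 2 := by
        have := dist_nonneg (x := x) (y := z₀)
        have := mem_closedBall.1 hx
        gcongr
      simp only [sub_self]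
      nlinarith
    have hη9 : η (t₁, x) ≤ 9 * ρ ^ 2 := by
      rw [hηa]; simp only [sub_self]; linarith [rad_nonneg z₀ (t₁, x)]
    have h3 : η (t₁, x) * (η (t₁, x) * η (t₁, x)) ≤ (9 * ρ ^ 2) ^ 3 := by
      have : η (t₁, x) ^ 3 ≤ (9 * ρ ^ 2) ^ 3 := by gcongr
      linarith [this, show η (t₁, x) ^ 3 = η (t₁, x) * (η (t₁, x) * η (t₁, x)) by ring]
    have hg : gradNormSq (f t₁) x ≤ L ^ 2 := by
      have := h0 x (hcb hx)
      unfold gradNorm at this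
      exact (Real.sqrt_le_left hL).1 this
    calc (1 + gradNormSq (f t₁) x) * (η (t₁, x) * (η (t₁, x) * η (t₁, x)))
        ≤ (1 + L ^ 2) * (9 * ρ ^ 2) ^ 3 := by
          refine mul_le_mul (by linarith) h3 (by positivity) (by positivity)
      _ < θ := by
        rw [hθ]
        have : 0 < (9 * ρ ^ 2) ^ 3 := by positivity
        nlinarith
  · intro s hs x hx
    have hη0 : η (s, x) ≤ 0 := by
      rw [hηa, rad_apply]
      simp only [mem_sphere.1 hx]
      have : 0 ≤ (2 * (n:ℝ) + 1) * (s - t₁) := by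
        have : 0 ≤ s - t₁ := by linarith [hs.1]
        positivity
      nlinarith
    have h3 : η (s, x) * (η (s, x) * η (s, x)) ≤ 0 :=
      mul_nonpos_of_nonpos_of_nonneg hη0 (mul_self_nonneg _)
    have : (1 + gradNormSq (f s) x) * (η (s, x) * (η (s, x) * η (s, x))) ≤ 0 :=
      mul_nonpos_of_nonneg_of_nonpos (by linarith [hgn0 s x]) h3
    exact this.trans_lt hθ0
  · intro p hp hG hD
    have hp' := sub_dom' le_rfl hτ2 hcb hp
    set a := aM (gr (spt f) p) with ha
    have hsy : ∀ i j, a i j = a j i := aM_symm _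
    have hQ := Qf_pos (spt f) p
    have hηp : 0 < η p := by
      by_contra! h
      have h3 : η p * (η p * η p) ≤ 0 :=
        mul_nonpos_of_nonpos_of_nonneg h (mul_self_nonneg _)
      have : Qf (spt f) p * (η p * (η p * η p)) ≤ 0 :=
        mul_nonpos_of_nonneg_of_nonpos hQ.le h3
      simp only [Pi.mul_apply] at hG
      linarith
    -- first order condition
    have hW := Wf_pos (spt f) p
    have hWQ : Wf (spt f) p * Qf (spt f) p = 1 := inv_mul_cancel₀ hQ.ne'
    have hDη : ∀ i, dv (ev i) η p = -(η p * Wf (spt f) p / 3) * dv (ev i) (Qf (spt f)) p := by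
      intro i
      have := hD i
      rw [dv_mul hu.Qf (hηs.mul (hηs.mul hηs)) hp', dv_mul hηs (hηs.mul hηs) hp',
        dv_mul hηs hηs hp'] at this
      simp only [Pi.mul_apply] at this
      have h2 : η p ^ 2 * (3 * Qf (spt f) p * dv (ev i) η p + η p * dv (ev i) (Qf (spt f)) p)
          = 0 := by linear_combination this
      have h3 : 3 * Qf (spt f) p * dv (ev i) η p + η p * dv (ev i) (Qf (spt f)) p = 0 := by
        rcases mul_eq_zero.1 h2 with h | h
        · exact absurd h (by positivity)
        · exact h
      linear_combination (Wf (spt f) p / 3) * h3 - dv (ev i) η p * hWQ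
    have hA1 : AA a (Qf (spt f)) η p
        = -(η p * Wf (spt f) p / 3) * AA a (Qf (spt f)) (Qf (spt f)) p := by
      unfold AA
      simp only [hDη, Finset.mul_sum]
      exact Finset.sum_congr rfl fun i _ => Finset.sum_congr rfl fun j _ => by ring
    have hA2 : AA a η η p
        = (η p * Wf (spt f) p / 3) ^ 2 * AA a (Qf (spt f)) (Qf (spt f)) p := by
      unfold AA
      simp only [hDη, Finset.mul_sum]
      exact Finset.sum_congr rfl fun i _ => Finset.sum_congr rfl fun j _ => by ring
    have hPη : PP a η p ≤ -1 := by
      rw [hη, PP_sub hΩ (Sm.const _) hB hp', PP_const,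
        PP_add hΩ (Sm.rad z₀) ((Sm.tm t₁).smul _) hp', PP_smul hΩ _ (Sm.tm t₁) hp', PP_tm,
        PP_rad hΩ hsy hp']
      have h1 := aM_trace (gr (spt f) p)
      linarith
    have hPQ := PP_Qf_le1 hΩ hu (fun p hp => gmcf_pde hU hf hp) hp'
    rw [← ha] at hPQ
    have hAQ : 0 ≤ AA a (Qf (spt f)) (Qf (spt f)) p := aM_nonneg _ _
    rw [PP_mul hΩ hsy hu.Qf (hηs.mul (hηs.mul hηs)) hp', PP_mul hΩ hsy hηs (hηs.mul hηs) hp',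
      PP_mul hΩ hsy hηs hηs hp', AA_mul_right hηs (hηs.mul hηs) hp', AA_mul_right hηs hηs hp',
      AA_mul_right hηs hηs hp', hA1, hA2]
    simp only [Pi.mul_apply]
    set A := AA a (Qf (spt f)) (Qf (spt f)) p
    set Q := Qf (spt f) p
    set W := Wf (spt f) p
    set e := η p
    have t1 : e ^ 3 * PP a (Qf (spt f)) p ≤ e ^ 3 * (-(3 / 2) * W * A) :=
      mul_le_mul_of_nonneg_left hPQ (by positivity)
    have t2 : 3 * Q * e ^ 2 * PP a η p ≤ 3 * Q * e ^ 2 * (-1) :=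
      mul_le_mul_of_nonneg_left hPη (by positivity)
    have t3 : 0 < 3 * Q * e ^ 2 := by positivity
    have t4 : 0 ≤ e ^ 3 * W * A := by positivity
    have t5 : Q * e ^ 3 * W ^ 2 * A = e ^ 3 * W * A := by
      linear_combination (e ^ 3 * W * A) * hWQ
    nlinarith

end steps

section steps2
variable {n : ℕ} {t₁ t₂ τ ρ : ℝ} {z₀ : EE n} {f : ℝ → EE n → ℝ}

lemma gns_nonneg (g : EE n → ℝ) (x : EE n) : 0 ≤ gradNormSq g x := by
  unfold gradNormSq; positivity

lemma dv_tm_ev (c : ℝ) (i : Fin n) (p : ℝ × EE n) : dv (ev i) (tm n c) p = 0 := by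
  rw [dv_tm]; rfl

/-- Step C: the gradient becomes small. -/
lemma grad_small (hρ : 0 < ρ) (hτ : 0 < τ) (hτ2 : t₁ + τ < t₂)
    (hf : IsGMCF (Ico t₁ t₂) (ball z₀ (4 * ρ)) f) {M V κ : ℝ} (hM : 0 < M) (hV : 0 < V)
    (hκ0 : 0 < κ) (hκ : τ * V ≤ κ * ρ ^ 2)
    (hA : ∀ t ∈ Icc t₁ (t₁ + τ), ∀ x ∈ ball z₀ (3 * ρ), |f t x| ≤ M)
    (hB : ∀ t ∈ Icc t₁ (t₁ + τ), ∀ x ∈ ball z₀ (5 / 2 * ρ), 1 + gradNormSq (f t) x ≤ V) :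
    ∀ t ∈ Icc t₁ (t₁ + τ), ∀ x ∈ ball z₀ (3 / 2 * ρ),
      (t - t₁) * gradNormSq (f t) x < V * M ^ 2 + κ * ((2 * n + 1) * (t - t₁)) := by
  intro t ht x0 hx0
  have hU : IsOpen (ball z₀ (4 * ρ)) := isOpen_ball
  have hΩ : IsOpen (Ioo t₁ t₂ ×ˢ ball z₀ (4 * ρ)) := isOpen_Ioo.prod hU
  have hu := gmcf_sm hU hf
  have hcb5 : closedBall x0 ρ ⊆ ball z₀ (5 / 2 * ρ) := cb_sub hx0 (by linarith)
  have hcb3 : closedBall x0 ρ ⊆ ball z₀ (3 * ρ) := cb_sub hx0 (by linarith)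
  have hcb : closedBall x0 ρ ⊆ ball z₀ (4 * ρ) := cb_sub hx0 (by linarith)
  have hf2 : ∀ s ∈ Icc t₁ (t₁ + τ), ∀ x ∈ closedBall x0 ρ, f s x ^ 2 ≤ M ^ 2 := by
    intro s hs x hx
    rw [← sq_abs]
    have := hA s hs x (hcb3 hx)
    gcongr
  have hBs : Sm (Ioo t₁ t₂ ×ˢ ball z₀ (4 * ρ)) (rad x0 + (2 * n + 1 : ℝ) • tm n t₁) :=
    (Sm.rad x0).add ((Sm.tm t₁).smul _)
  have hQs : Sm (Ioo t₁ t₂ ×ˢ ball z₀ (4 * ρ)) (Qf (spt f) - fun _ => (1 : ℝ)) :=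
    hu.Qf.sub (Sm.const 1)
  have hVM : 0 < V * M ^ 2 := by positivity
  have key := max_principle' hΩ
    (G := (tm n t₁ * (Qf (spt f) - fun _ => (1 : ℝ)) + (V / 2) • (spt f) ^ 2)
      - κ • (rad x0 + (2 * n + 1 : ℝ) • tm n t₁))
    (G' := fun p => ((p.1 - t₁) * gradNormSq (f p.1) p.2 + V / 2 * (spt f p) ^ 2)
      - κ * (rad x0 p + (2 * n + 1) * tm n t₁ p))
    ((((Sm.tm t₁).mul hQs).add ((hu.pow 2).smul _)).sub (hBs.smul _)) ?_ (gr (spt f)) (a := t₁)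
    (b := t₁ + τ) (θ := V * M ^ 2) (x0 := x0) (r := ρ) ?_ (sub_dom' le_rfl hτ2 hcb) ?_ ?_ ?_
  · have := key t ht x0 (mem_closedBall_self hρ.le)
    simp only [rad_apply, tm, dist_self] at this
    have h2 : 0 ≤ V / 2 * (spt f (t, x0)) ^ 2 := by positivity
    have e : κ * (0 ^ 2 + (2 * n + 1) * (t - t₁)) = κ * ((2 * n + 1) * (t - t₁)) := by ring
    rw [e] at this
    linarith
  · intro p hp
    simp only [Pi.mul_apply, Pi.add_apply, Pi.sub_apply, Pi.smul_apply, Pi.pow_apply, smul_eq_mul,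
      Qf_apply, gns_eq hU hf hp, tm]
    ring
  · have hc := (gns_cont hU hf).mono (sub_dom le_rfl hτ2 hcb)
    have hc2 : ContinuousOn (spt f) (Icc t₁ (t₁ + τ) ×ˢ closedBall x0 ρ) :=
      hf.1.continuousOn.mono (sub_dom le_rfl hτ2 hcb)
    have hc3 : Continuous (fun p : ℝ × EE n => κ * (rad x0 p + (2 * n + 1) * tm n t₁ p)) :=
      continuous_const.mul ((rad_cont x0).add (continuous_const.mul (tm_cont t₁)))
    have hc4 : Continuous (fun p : ℝ × EE n => p.1 - t₁) := by fun_prop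
    exact ((hc4.continuousOn.mul hc).add (continuousOn_const.mul (hc2.pow 2))).sub hc3.continuousOn
  · intro x hx
    have h1 := hf2 t₁ ⟨le_rfl, by linarith⟩ x hx
    have h2 := mul_nonneg hκ0.le (rad_nonneg x0 (t₁, x))
    simp only [spt, tm, sub_self, zero_mul, mul_zero, add_zero, zero_add]
    nlinarith
  · intro s hs x hx
    have hx' : x ∈ closedBall x0 ρ := sphere_subset_closedBall hx
    have h1 := hf2 s hs x hx'
    have h3 := hB s hs x (hcb5 hx')
    have hs0 : 0 ≤ s - t₁ := by linarith [hs.1]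
    have hs1 : s - t₁ ≤ τ := by linarith [hs.2]
    simp only [spt, rad_apply, tm, mem_sphere.1 hx]
    have h4 : (s - t₁) * gradNormSq (f s) x ≤ τ * V :=
      mul_le_mul hs1 (by linarith) (gns_nonneg _ _) hτ.le
    have h5 : 0 ≤ κ * ((2 * n + 1) * (s - t₁)) := by positivity
    nlinarith
  · intro p hp _ _
    have hp' := sub_dom' le_rfl hτ2 hcb hp
    have hPQ := PP_Qf_le1 hΩ hu (fun p hp => gmcf_pde hU hf hp) hp'
    have hAQ : 0 ≤ AA (aM (gr (spt f) p)) (Qf (spt f)) (Qf (spt f)) p := aM_nonneg _ _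
    have hW := Wf_pos (spt f) p
    have hQ := Qf_pos (spt f) p
    have hWQ : Wf (spt f) p * Qf (spt f) p = 1 := inv_mul_cancel₀ hQ.ne'
    have hQV : Qf (spt f) p ≤ V := by
      have := hB p.1 (Ioc_subset_Icc_self hp.1) p.2 (hcb5 (ball_subset_closedBall hp.2))
      rwa [gns_eq hU hf hp', ← Qf_apply] at this
    have hQ1 : 1 ≤ Qf (spt f) p := by
      rw [Qf_apply]; have : 0 ≤ ∑ k, gr (spt f) p k ^ 2 := by positivity
      linarith
    have hAu : Wf (spt f) p * (Qf (spt f) p - 1) ≤ AA (aM (gr (spt f) p)) (spt f) (spt f) p := by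
      have := aM_lower (gr (spt f) p) (gr (spt f) p)
      rw [← Wf_apply] at this
      have e : Qf (spt f) p - 1 = ∑ k, gr (spt f) p k ^ 2 := by rw [Qf_apply]; ring
      rw [e]; exact this
    have hA0 : AA (aM (gr (spt f) p)) (tm n t₁) (Qf (spt f) - fun _ => (1 : ℝ)) p = 0 :=
      AA_zero_left fun i => dv_tm_ev _ _ _
    rw [PP_sub hΩ (((Sm.tm t₁).mul hQs).add ((hu.pow 2).smul _)) (hBs.smul _) hp',
      PP_add hΩ ((Sm.tm t₁).mul hQs) ((hu.pow 2).smul _) hp',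
      PP_mul hΩ (aM_symm _) (Sm.tm t₁) hQs hp', PP_smul hΩ _ (hu.pow 2) hp',
      PP_sq hΩ (aM_symm _) hu hp', PP_sub hΩ hu.Qf (Sm.const 1) hp', PP_const, hA0,
      PP_smul hΩ _ hBs hp', PP_add hΩ (Sm.rad x0) ((Sm.tm t₁).smul _) hp',
      PP_smul hΩ _ (Sm.tm t₁) hp', PP_tm, PP_rad hΩ (aM_symm _) hp', gmcf_pde hU hf hp']
    simp only [Pi.sub_apply]
    have h1 := aM_trace (gr (spt f) p)
    have h2 : 0 < κ * (-2 * ∑ k, aM (gr (spt f) p) k k + (2 * n + 1) * 1) :=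
      mul_pos hκ0 (by linarith)
    have htm : 0 ≤ tm n t₁ p := by
      have := hp.1.1
      simp only [tm]; linarith
    have h3 : PP (aM (gr (spt f) p)) (Qf (spt f)) p ≤ 0 := by
      have := mul_nonneg hW.le hAQ
      linarith
    have h4 := mul_nonpos_of_nonneg_of_nonpos htm h3
    have h5 : 1 ≤ V * Wf (spt f) p := by
      have := mul_le_mul_of_nonneg_left hQV hW.le
      linarith
    have h6 := mul_le_mul_of_nonneg_left hAu hV.le
    have h7 : (Qf (spt f) p - 1) * 1 ≤ (Qf (spt f) p - 1) * (V * Wf (spt f) p) :=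
      mul_le_mul_of_nonneg_left h5 (by linarith)
    nlinarith

lemma final_alg {T e h r C m S N Ph Pe A PQ : ℝ} (htm0 : 0 ≤ T) (htm1 : T ≤ r) (he0 : 0 ≤ e)
    (he1 : e ≤ 1) (hh : 0 < h) (hr : 0 < r) (hC : 0 ≤ C) (hm : 0 ≤ m) (hS : 0 ≤ S)
    (hTeh : T * (e * e * h) ≤ 1) (hN : N = C + 16 * m + 258)
    (hPh : Ph ≤ C * h ^ 2 - (3 / 2) * S) (hPe : Pe ≤ 16 * m / r)
    (hA : -(2 * A) ≤ 16 * h * (16 / r) + e ^ 2 * S) (hPQ : PQ ≤ -h) :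
    T * (e * e * Ph + h * Pe - 2 * A) + e * e * h * 1 - 2 * 0 + N * (PQ - 0) < 0 := by
  have k1 : T * (e * e) * Ph ≤ T * (e * e) * (C * h ^ 2 - (3 / 2) * S) :=
    mul_le_mul_of_nonneg_left hPh (by positivity)
  have k2 : C * h * (T * (e * e * h)) ≤ C * h * 1 :=
    mul_le_mul_of_nonneg_left hTeh (by positivity)
  have k3 : T * (h * Pe) ≤ 16 * m * h := by
    have j1 : T * (h * Pe) ≤ T * (h * (16 * m / r)) := by gcongr
    have j2 : T * (h * (16 * m / r)) ≤ r * (h * (16 * m / r)) := by gcongr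
    have j3 : r * (h * (16 * m / r)) = 16 * m * h := by field_simp
    linarith
  have k4 : T * -(2 * A) ≤ 256 * h + T * (e ^ 2 * S) := by
    have j1 := mul_le_mul_of_nonneg_left hA htm0
    have j2 : T * (16 * h * (16 / r)) ≤ r * (16 * h * (16 / r)) := by gcongr
    have j3 : r * (16 * h * (16 / r)) = 256 * h := by field_simp; norm_num
    linarith
  have k5 : e * e * h ≤ h := mul_le_of_le_one_left hh.le (by nlinarith)
  have k6 : N * PQ ≤ N * -h := mul_le_mul_of_nonneg_left hPQ (by rw [hN]; positivity)
  have k7 : 0 ≤ T * (e ^ 2 * S) := by positivity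
  have k8 : N * -h = -(C * h * 1 + 16 * m * h + 258 * h) := by rw [hN]; ring
  have k9 : T * (e * e) * (C * h ^ 2 - (3 / 2) * S)
      = C * h * (T * (e * e * h)) - (3 / 2) * (T * (e ^ 2 * S)) := by ring
  linarith

set_option maxHeartbeats 1000000 in
/-- Step D: the Hessian bound. -/
lemma hess_bound (hρ : 0 < ρ) {c : ℝ} (hc1 : t₁ < c) (hcT : c < t₁ + τ) (hτ2 : t₁ + τ < t₂)
    (hcρ : t₁ + τ - c ≤ ρ ^ 2)
    (hf : IsGMCF (Ico t₁ t₂) (ball z₀ (4 * ρ)) f)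
    (hC : ∀ t ∈ Icc c (t₁ + τ), ∀ x ∈ ball z₀ (3 / 2 * ρ),
      (C2 n + 16 * n + 258) * gradNormSq (f t) x < 1) :
    ∀ x ∈ ball z₀ ρ, (t₁ + τ - c) * _root_.hf (spt f) (t₁ + τ, x) ≤ 1 := by
  intro x0 hx0
  have hU : IsOpen (ball z₀ (4 * ρ)) := isOpen_ball
  have hΩ : IsOpen (Ioo t₁ t₂ ×ˢ ball z₀ (4 * ρ)) := isOpen_Ioo.prod hU
  have hu := gmcf_sm hU hf
  have hcb3 : closedBall x0 (ρ / 2) ⊆ ball z₀ (3 / 2 * ρ) := cb_sub hx0 (by linarith)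
  have hcb : closedBall x0 (ρ / 2) ⊆ ball z₀ (4 * ρ) := cb_sub hx0 (by linarith)
  have hC20 : 0 ≤ C2 n := by unfold C2 Cn; positivity
  set N := C2 n + 16 * n + 258 with hN
  have hN2 : 2 ≤ N := by rw [hN]; have : (0:ℝ) ≤ n := by positivity
                         linarith
  set η : ℝ × EE n → ℝ := (fun _ => 1) - (4 / ρ ^ 2) • rad x0 with hη
  have hηa : ∀ p, η p = 1 - 4 / ρ ^ 2 * rad x0 p := fun p => rfl
  have hηs : Sm (Ioo t₁ t₂ ×ˢ ball z₀ (4 * ρ)) η := (Sm.const _).sub ((Sm.rad x0).smul _)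
  have hsubc : Icc c (t₁ + τ) ×ˢ closedBall x0 (ρ / 2) ⊆ Ioo t₁ t₂ ×ˢ ball z₀ (4 * ρ) :=
    prod_mono (fun _ ht => ⟨hc1.trans_le ht.1, ht.2.trans_lt hτ2⟩) hcb
  have hh0 : ∀ p, 0 ≤ _root_.hf (spt f) p := fun p => by rw [hf_apply]; positivity
  have hNq : ∀ p ∈ Icc c (t₁ + τ) ×ˢ closedBall x0 (ρ / 2), N * (Qf (spt f) p - 1) < 1 := by
    intro p hp
    have h1 := hC p.1 hp.1 p.2 (hcb3 hp.2)
    rw [gns_eq hU hf (hsubc hp)] at h1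
    rw [Qf_apply]
    linarith
  have hQs : Sm (Ioo t₁ t₂ ×ˢ ball z₀ (4 * ρ)) (Qf (spt f) - fun _ => (1 : ℝ)) :=
    hu.Qf.sub (Sm.const 1)
  have hηh := (hηs.mul hηs).mul hu.hf
  have hGs := ((Sm.tm c).mul hηh).add (hQs.smul N)
  have key := max_principle hΩ
    (G := tm n c * ((η * η) * _root_.hf (spt f)) + N • (Qf (spt f) - fun _ => (1 : ℝ)))
    hGs (gr (spt f)) (a := c) (b := t₁ + τ) (θ := 1) (x0 := x0) (r := ρ / 2) ?_
    (sub_dom' hc1.le hτ2 hcb) ?_ ?_ ?_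
  · have := key (t₁ + τ) ⟨hcT.le, le_rfl⟩ x0 (mem_closedBall_self (by linarith))
    simp only [Pi.mul_apply, Pi.add_apply, Pi.sub_apply, Pi.smul_apply, smul_eq_mul, hηa,
      rad_apply, tm, dist_self] at this
    have hQ1 : 1 ≤ Qf (spt f) (t₁ + τ, x0) := by
      rw [Qf_apply]; have : 0 ≤ ∑ k, gr (spt f) (t₁ + τ, x0) k ^ 2 := by positivity
      linarith
    have h2 : 0 ≤ N * (Qf (spt f) (t₁ + τ, x0) - 1) := mul_nonneg (by linarith) (by linarith)
    norm_num at this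
    linarith
  · intro p hp
    exact (hGs p (hsubc hp)).continuousAt.continuousWithinAt
  · intro x hx
    simp only [Pi.mul_apply, Pi.add_apply, Pi.sub_apply, Pi.smul_apply, smul_eq_mul, tm, sub_self,
      zero_mul, zero_add]
    exact hNq (c, x) ⟨⟨le_rfl, hcT.le⟩, hx⟩
  · intro s hs x hx
    have hx' : x ∈ closedBall x0 (ρ / 2) := sphere_subset_closedBall hx
    have hη0 : η (s, x) = 0 := by
      rw [hηa, rad_apply]
      simp only [mem_sphere.1 hx]
      field_simp
      ring
    simp only [Pi.mul_apply, Pi.add_apply, Pi.sub_apply, Pi.smul_apply, smul_eq_mul, hη0,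
      zero_mul, mul_zero, zero_add]
    exact hNq (s, x) ⟨hs, hx'⟩
  · intro p hp hG _
    have hp' := sub_dom' hc1.le hτ2 hcb hp
    have hpc : p ∈ Icc c (t₁ + τ) ×ˢ closedBall x0 (ρ / 2) :=
      ⟨Ioc_subset_Icc_self hp.1, ball_subset_closedBall hp.2⟩
    have hq := hNq p hpc
    set a := aM (gr (spt f) p) with ha
    have hsy : ∀ i j, a i j = a j i := aM_symm _
    set h := _root_.hf (spt f) p with hh
    have hhn : 0 ≤ h := hh0 p
    simp only [Pi.mul_apply, Pi.add_apply, Pi.sub_apply, Pi.smul_apply, smul_eq_mul] at hG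
    rw [← hh] at hG
    have hhp : 0 < h := by
      rcases hhn.lt_or_eq with h1 | h1
      · exact h1
      · rw [← h1] at hG; simp only [mul_zero, zero_add] at hG; linarith
    have hQ := Qf_pos (spt f) p
    have hQ1 : 1 ≤ Qf (spt f) p := by
      rw [Qf_apply]; have : 0 ≤ ∑ k, gr (spt f) p k ^ 2 := by positivity
      linarith
    have hq0 : 0 ≤ N * (Qf (spt f) p - 1) := mul_nonneg (by linarith) (by linarith)
    have hq1 : Qf (spt f) p - 1 ≤ 1 / 2 := by nlinarith
    have hW := Wf_pos (spt f) p
    have hWQ : Wf (spt f) p * Qf (spt f) p = 1 := inv_mul_cancel₀ hQ.ne'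
    have hW2 : 1 / 2 ≤ Wf (spt f) p := by nlinarith
    have hρ2 : 0 < ρ ^ 2 := by positivity
    have hrad : rad x0 p ≤ ρ ^ 2 / 4 := by
      rw [rad_apply]
      have h1 : dist p.2 x0 ≤ ρ / 2 := mem_closedBall.1 hpc.2
      have h2 : dist p.2 x0 ^ 2 ≤ (ρ / 2) ^ 2 := by gcongr
      linarith
    have hη0 : 0 ≤ η p := by
      rw [hηa]
      have : 4 / ρ ^ 2 * rad x0 p ≤ 4 / ρ ^ 2 * (ρ ^ 2 / 4) := by gcongr
      have e : 4 / ρ ^ 2 * (ρ ^ 2 / 4) = 1 := by field_simp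
      linarith
    have hη1 : η p ≤ 1 := by
      rw [hηa]
      have := mul_nonneg (show 0 ≤ 4 / ρ ^ 2 by positivity) (rad_nonneg x0 p)
      linarith
    have htm0 : 0 ≤ tm n c p := by
      have := hp.1.1
      simp only [tm]; linarith
    have htm1 : tm n c p ≤ ρ ^ 2 := by
      have := hp.1.2
      simp only [tm]; linarith
    have hDη : ∀ i, dv (ev i) η p = -(8 / ρ ^ 2) * Xc x0 i p := by
      intro i
      rw [hη, dv_sub (Sm.const _) ((Sm.rad x0).smul _) hp', dv_const,
        dv_smul _ (Sm.rad x0) hp', dv_rad hp']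
      ring
    have hAη : AA a η η p ≤ 16 / ρ ^ 2 := by
      refine (aM_upper (gr (spt f) p) (fun i => dv (ev i) η p)).trans ?_
      simp only [hDη, mul_pow]
      rw [← Finset.mul_sum]
      have e : ∑ i, Xc x0 i p ^ 2 = rad x0 p := by simp [rad]
      rw [e]
      calc (-(8 / ρ ^ 2)) ^ 2 * rad x0 p ≤ (-(8 / ρ ^ 2)) ^ 2 * (ρ ^ 2 / 4) := by gcongr
        _ = 16 / ρ ^ 2 := by field_simp; norm_num
    have hAη0 : 0 ≤ AA a η η p := aM_nonneg _ _
    have hPη : PP a η p ≤ 8 / ρ ^ 2 * n := by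
      rw [hη, PP_sub hΩ (Sm.const _) ((Sm.rad x0).smul _) hp', PP_const,
        PP_smul hΩ _ (Sm.rad x0) hp', PP_rad hΩ hsy hp']
      have h1 := mul_le_mul_of_nonneg_left (aM_trace (gr (spt f) p))
        (show 0 ≤ 8 / ρ ^ 2 by positivity)
      rw [← ha] at h1
      have e : 0 - 4 / ρ ^ 2 * (-2 * ∑ k, a k k) = 8 / ρ ^ 2 * ∑ k, a k k := by ring
      rw [e]; exact h1
    have hPη2 : PP a (η * η) p ≤ 16 * n / ρ ^ 2 := by
      rw [PP_mul hΩ hsy hηs hηs hp']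
      have h1 : η p * PP a η p ≤ 8 / ρ ^ 2 * n :=
        (mul_le_mul_of_nonneg_left hPη hη0).trans
          (mul_le_of_le_one_left (by positivity) hη1)
      have e : 16 * n / ρ ^ 2 = 2 * (8 / ρ ^ 2 * n) := by ring
      rw [e]; linarith
    set S := ∑ k, ∑ l, AA a (dv (ev k) (dv (ev l) (spt f))) (dv (ev k) (dv (ev l) (spt f))) p
      with hS
    have hS0 : 0 ≤ S := Finset.sum_nonneg fun k _ => Finset.sum_nonneg fun l _ => aM_nonneg _ _
    have hPh : PP a (_root_.hf (spt f)) p ≤ C2 n * h ^ 2 - (3 / 2) * S := by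
      refine PP_hf_le hΩ hu (fun p hp => gmcf_pde hU hf hp) hp' ?_
      rw [Qf_apply] at hq1
      linarith
    have hAh : -(2 * AA a (η * η) (_root_.hf (spt f)) p) ≤ 16 * h * (16 / ρ ^ 2) + η p ^ 2 * S := by
      have e1 : AA a (η * η) (_root_.hf (spt f)) p = 2 * η p * AA a η (_root_.hf (spt f)) p := by
        rw [AA_symm hsy, AA_mul_right hηs hηs hp', AA_symm hsy (F := _root_.hf (spt f))]; ring
      have e2 : AA a η (_root_.hf (spt f)) p
          = ∑ k, ∑ l, 2 * hs (spt f) p k l * AA a η (dv (ev k) (dv (ev l) (spt f))) p := by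
        unfold _root_.hf
        rw [AA_sum_right _ (fun k => Sm.sum _ fun l _ => ((hu.dv _).dv _).pow 2) hp']
        refine Finset.sum_congr rfl fun k _ => ?_
        rw [AA_sum_right _ (fun l => ((hu.dv _).dv _).pow 2) hp']
        refine Finset.sum_congr rfl fun l _ => ?_
        rw [pow_two, AA_mul_right ((hu.dv _).dv _) ((hu.dv _).dv _) hp']
        simp only [hs]; ring
      have e3 : -(2 * AA a (η * η) (_root_.hf (spt f)) p)
          = ∑ k, ∑ l, -(2 * (4 * hs (spt f) p k l) * η p
            * AA a η (dv (ev k) (dv (ev l) (spt f))) p) := by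
        rw [e1, e2, Finset.mul_sum, Finset.mul_sum, ← Finset.sum_neg_distrib]
        refine Finset.sum_congr rfl fun k _ => ?_
        rw [Finset.mul_sum, Finset.mul_sum, ← Finset.sum_neg_distrib]
        refine Finset.sum_congr rfl fun l _ => ?_
        ring
      have e4 : 16 * h * AA a η η p + η p ^ 2 * S = ∑ k, ∑ l,
          ((4 * hs (spt f) p k l) ^ 2 * AA a η η p + η p ^ 2
            * AA a (dv (ev k) (dv (ev l) (spt f))) (dv (ev k) (dv (ev l) (spt f))) p) := by
        simp only [Finset.sum_add_distrib, ← Finset.mul_sum, ← Finset.sum_mul, mul_pow]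
        rw [hh, hf_apply]
        norm_num
        exact Or.inl rfl
      have h5 : -(2 * AA a (η * η) (_root_.hf (spt f)) p)
          ≤ 16 * h * AA a η η p + η p ^ 2 * S := by
        rw [e3, e4]
        refine Finset.sum_le_sum fun k _ => Finset.sum_le_sum fun l _ => ?_
        exact aM_young (gr (spt f) p) _ _ _ _
      have h6 : 16 * h * AA a η η p ≤ 16 * h * (16 / ρ ^ 2) := by gcongr
      linarith
    have hPQ : PP a (Qf (spt f)) p ≤ -h := by
      have h1 := PP_Qf_le2 hΩ hu (fun p hp => gmcf_pde hU hf hp) hp'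
      rw [← hf_apply, ← hh, ← ha] at h1
      nlinarith
    have hA0 : AA a (tm n c) (η * η * _root_.hf (spt f)) p = 0 :=
      AA_zero_left fun i => dv_tm_ev _ _ _
    rw [PP_add hΩ ((Sm.tm c).mul hηh) (hQs.smul N) hp', PP_mul hΩ hsy (Sm.tm c) hηh hp', hA0,
      PP_tm, PP_mul hΩ hsy (hηs.mul hηs) hu.hf hp', PP_smul hΩ _ hQs hp',
      PP_sub hΩ hu.Qf (Sm.const 1) hp', PP_const]
    simp only [Pi.mul_apply]
    rw [← hh]
    exact final_alg htm0 htm1 hη0 hη1 hhp hρ2 hC20 (by positivity) hS0 (by linarith) hN hPh hPη2 hAh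
      hPQ

end steps2

set_option maxHeartbeats 1000000 in
/-- **Becoming flat** (graphical case of Lemma `flatgraphlem`).
For every `L₀ ≥ 1` there are `Λ₁ > 1` and `γ₁ ∈ (0,1)` such that: if `f` is a graphical
mean curvature flow on `[t₁,t₂) × Bⁿ(ẑ₀,4ρ₀)` with `|f| < 4ρ₀`,
`sup |Df(t₁,·)| ≤ L₀` and `sup |f(t₁,·)| ≤ γ⁴ρ₀` for some `γ ∈ (0,γ₁]`, then at the time
`s₁ = t₁ + γ⁴ρ₀²` (assumed `< t₂`) one has, for all `x ∈ Bⁿ(ẑ₀,ρ₀)`: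
`|f(s₁,x)| ≤ Λ₁γ⁴ρ₀`, `|Df(s₁,x)| ≤ Λ₁γ` and `|D²f(s₁,x)| ≤ Λ₁γ⁻²ρ₀⁻¹`. -/
theorem flatgraphlem (n : ℕ) (hn : 1 ≤ n) (L₀ : ℝ) (hL : 1 ≤ L₀) :
    ∃ Λ₁ γ₁ : ℝ, 1 < Λ₁ ∧ γ₁ ∈ Set.Ioo (0 : ℝ) 1 ∧
      ∀ γ ∈ Set.Ioc (0 : ℝ) γ₁, ∀ ρ₀ : ℝ, 0 < ρ₀ → ∀ t₁ t₂ : ℝ,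
        t₁ + γ ^ 4 * ρ₀ ^ 2 < t₂ →
        ∀ (z₀ : EuclideanSpace ℝ (Fin n)) (f : ℝ → EuclideanSpace ℝ (Fin n) → ℝ),
          IsGMCF (Set.Ico t₁ t₂) (Metric.ball z₀ (4 * ρ₀)) f →
          (∀ t ∈ Set.Ico t₁ t₂, ∀ x ∈ Metric.ball z₀ (4 * ρ₀), |f t x| < 4 * ρ₀) →
          (∀ x ∈ Metric.ball z₀ (4 * ρ₀), gradNorm (f t₁) x ≤ L₀) →
          (∀ x ∈ Metric.ball z₀ (4 * ρ₀), |f t₁ x| ≤ γ ^ 4 * ρ₀) →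
          ∀ x ∈ Metric.ball z₀ ρ₀,
            |f (t₁ + γ ^ 4 * ρ₀ ^ 2) x| ≤ Λ₁ * γ ^ 4 * ρ₀ ∧
            gradNorm (f (t₁ + γ ^ 4 * ρ₀ ^ 2)) x ≤ Λ₁ * γ ∧
            hessNorm (f (t₁ + γ ^ 4 * ρ₀ ^ 2)) x ≤ Λ₁ * (γ ^ 2)⁻¹ * ρ₀⁻¹ := by
  have hn0 : (0 : ℝ) ≤ n := by positivity
  have hC20 : 0 ≤ C2 n := by unfold C2 Cn; positivity
  set cA : ℝ := 8 * n + 6 with hcA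
  set V : ℝ := 729 * (2 + L₀ ^ 2) with hV
  set N : ℝ := C2 n + 16 * n + 258 with hN
  set C3 : ℝ := V * (2 * cA ^ 2 + (2 * n + 1)) with hC3
  have hV0 : 0 < V := by positivity
  have hN0 : 0 < N := by positivity
  have hcA0 : 0 < cA := by positivity
  have hC30 : 0 < C3 := by positivity
  have hD : 0 < 2 * N * C3 + 2 * n + 3 := by positivity
  refine ⟨cA + Real.sqrt C3 + 2, 1 / (2 * N * C3 + 2 * n + 3), ?_, ⟨by positivity, ?_⟩, ?_⟩
  · have := Real.sqrt_nonneg C3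
    linarith
  · rw [div_lt_one hD]
    have : 0 < 2 * N * C3 := by positivity
    linarith
  intro γ hγ ρ hρ t₁ t₂ hτ2 z₀ f hf hb hg0 hf0 x hx
  have hγ0 : 0 < γ := hγ.1
  have hγD : γ * (2 * N * C3 + 2 * n + 3) ≤ 1 := by
    have := hγ.2
    rwa [le_div_iff₀ hD] at this
  have hNC : 0 < N * C3 := by positivity
  have hγ1 : γ ≤ 1 := by nlinarith
  have hγ4 : γ ^ 4 ≤ γ := by
    simpa using pow_le_pow_of_le_one hγ0.le hγ1 (show 1 ≤ 4 by norm_num)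
  have hγ40 : 0 < γ ^ 4 := by positivity
  have hγ42 : γ ^ 4 ≤ γ ^ 2 := pow_le_pow_of_le_one hγ0.le hγ1 (by norm_num)
  have hD4 : γ ^ 4 * (2 * N * C3 + 2 * n + 3) ≤ 1 :=
    (mul_le_mul_of_nonneg_right hγ4 hD.le).trans hγD
  have hn4 : γ ^ 4 * (2 * n + 1) ≤ 1 := by nlinarith
  have hNC4 : N * (γ ^ 4 * C3) < 1 := by nlinarith
  set τ : ℝ := γ ^ 4 * ρ ^ 2 with hτ
  have hτ0 : 0 < τ := by positivity
  have hρ2 : 0 < ρ ^ 2 := by positivity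
  have hsq := Real.sqrt_nonneg C3
  -- height
  have hM : 2 * (γ ^ 4 * ρ) + 4 / ρ * (2 * n + 1) * τ = cA * γ ^ 4 * ρ := by
    rw [hτ, hcA]; field_simp; ring
  have hA := height hρ hτ0 hτ2 hf hb (ε := γ ^ 4 * ρ) (by positivity) hf0
  rw [hM] at hA
  -- gradient bound
  have hB := grad_bound hρ hτ2 (by rw [hτ]; nlinarith) hf (by linarith) hg0
  rw [← hV] at hB
  -- small gradient
  have hC := grad_small hρ hτ0 hτ2 hf (M := cA * γ ^ 4 * ρ) (κ := γ ^ 4 * V) (by positivity) hV0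
    (by positivity) (by rw [hτ]; exact le_of_eq (by ring)) hA hB
  have hC' : ∀ t ∈ Icc (t₁ + τ / 2) (t₁ + τ), ∀ x ∈ ball z₀ (3 / 2 * ρ),
      gradNormSq (f t) x < γ ^ 4 * C3 := by
    intro t ht y hy
    have h1 := hC t ⟨by linarith [ht.1], ht.2⟩ y hy
    have hs : τ / 2 ≤ t - t₁ := by linarith [ht.1]
    have hs0 : 0 < t - t₁ := by linarith
    have e1 : V * (cA * γ ^ 4 * ρ) ^ 2 = V * cA ^ 2 * γ ^ 4 * τ := by rw [hτ]; ring
    have h2 : V * cA ^ 2 * γ ^ 4 * τ ≤ V * cA ^ 2 * γ ^ 4 * (2 * (t - t₁)) := by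
      have : τ ≤ 2 * (t - t₁) := by linarith
      gcongr
    have h3 : (t - t₁) * gradNormSq (f t) y < (t - t₁) * (γ ^ 4 * C3) := by
      have e2 : (t - t₁) * (γ ^ 4 * C3)
          = V * cA ^ 2 * γ ^ 4 * (2 * (t - t₁)) + γ ^ 4 * V * ((2 * n + 1) * (t - t₁)) := by
        rw [hC3]; ring
      rw [e1] at h1
      linarith
    exact lt_of_mul_lt_mul_left h3 hs0.le
  -- Hessian bound
  have hE := hess_bound hρ (c := t₁ + τ / 2) (by linarith) (by linarith) hτ2
    (by rw [hτ]; nlinarith) hf (fun t ht y hy => by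
      have := mul_lt_mul_of_pos_left (hC' t ht y hy) hN0
      exact this.trans hNC4) x hx
  have hx3 : x ∈ ball z₀ (3 * ρ) := ball_subset_ball (by linarith) hx
  have hx32 : x ∈ ball z₀ (3 / 2 * ρ) := ball_subset_ball (by linarith) hx
  have hx4 : x ∈ ball z₀ (4 * ρ) := ball_subset_ball (by linarith) hx
  refine ⟨?_, ?_, ?_⟩
  · refine (hA (t₁ + τ) ⟨by linarith, le_rfl⟩ x hx3).trans ?_
    have : cA ≤ cA + Real.sqrt C3 + 2 := by linarith
    gcongr
  · have h1 := hC' (t₁ + τ) ⟨by linarith, le_rfl⟩ x hx32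
    unfold gradNorm
    have h2 : gradNormSq (f (t₁ + τ)) x ≤ γ ^ 2 * C3 :=
      h1.le.trans (mul_le_mul_of_nonneg_right hγ42 hC30.le)
    refine (Real.sqrt_le_sqrt h2).trans ?_
    rw [Real.sqrt_mul (by positivity), Real.sqrt_sq hγ0.le, mul_comm γ]
    exact mul_le_mul_of_nonneg_right (by linarith) hγ0.le
  · have hp : (t₁ + τ, x) ∈ Ioo t₁ t₂ ×ˢ ball z₀ (4 * ρ) := ⟨⟨by simp only; linarith, hτ2⟩, hx4⟩
    have e1 : ∑ i, ∑ j, (pd2 (f (t₁ + τ)) x i j) ^ 2 = _root_.hf (spt f) (t₁ + τ, x) := by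
      rw [hf_apply]
      refine Finset.sum_congr rfl fun i _ => Finset.sum_congr rfl fun j _ => ?_
      rw [← pd2_eq isOpen_ball hf hp]
    unfold hessNorm
    rw [e1]
    have hi : 0 < (γ ^ 2)⁻¹ * ρ⁻¹ := by positivity
    have h2 : _root_.hf (spt f) (t₁ + τ, x) ≤ (2 * ((γ ^ 2)⁻¹ * ρ⁻¹)) ^ 2 := by
      have e2 : (2 * ((γ ^ 2)⁻¹ * ρ⁻¹)) ^ 2 = 4 / τ := by
        rw [hτ]; field_simp; ring
      rw [e2, le_div_iff₀ hτ0]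
      have e3 : t₁ + τ - (t₁ + τ / 2) = τ / 2 := by ring
      rw [e3] at hE
      linarith
    refine (Real.sqrt_le_sqrt h2).trans ?_
    rw [Real.sqrt_sq (by positivity), mul_assoc]
    have : 2 ≤ cA + Real.sqrt C3 + 2 := by linarith
    gcongr
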